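/- arXiv:2001.00654 — 2 statements merged into one kernel-verified Lean document; each statement's English description precedes it below -/
import Mathlib

section
/- Let n ≥ 1. In the field of rational functions ℚ(y,t), the evaluation of the bivariate polynomial C_n^{(pk,des)}(Y,T) := Σ_{π ∈ 𝔠_n} Y^{pk(π)+1} T^{des(π)+1} at Y = (1+y)²t/((y+t)(1+yt)) and T = (y+t)/(1+yt) equals ((1+y)/(n(1+yt)^{n+1})) · Σ_{d ∣ n} μ(d) (1−(−y)^d)^{n/d} (1−t)^{n−n/d} A_{n/d}(t). -/
open scoped Classical

noncomputable section

def oneLine (n : ℕ) (π : Equiv.Perm (Fin n)) (i : ℕ) : ℕ :=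
  if h : 1 ≤ i ∧ i ≤ n then (π ⟨i - 1, by omega⟩).val + 1 else 0

def des (n : ℕ) (π : Equiv.Perm (Fin n)) : ℕ :=
  ((Finset.Icc 1 (n - 1)).filter fun i => oneLine n π (i + 1) < oneLine n π i).card

def pk (n : ℕ) (π : Equiv.Perm (Fin n)) : ℕ :=
  ((Finset.Icc 2 (n - 1)).filter fun i =>
    oneLine n π (i - 1) < oneLine n π i ∧ oneLine n π (i + 1) < oneLine n π i).card

def lpk (n : ℕ) (π : Equiv.Perm (Fin n)) : ℕ :=
  ((Finset.Icc 1 (n - 1)).filter fun i =>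
    oneLine n π (i - 1) < oneLine n π i ∧ oneLine n π (i + 1) < oneLine n π i).card

def pval (n : ℕ) (π : Equiv.Perm (Fin n)) : ℕ :=
  ((Finset.Icc 2 (n - 1)).filter fun i =>
    oneLine n π i < oneLine n π (i - 1) ∧ oneLine n π i < oneLine n π (i + 1)).card

def udr (n : ℕ) (π : Equiv.Perm (Fin n)) : ℕ := lpk n π + pval n π + 1

def fullCycleType (n : ℕ) (π : Equiv.Perm (Fin n)) : Multiset ℕ :=
  π.cycleType + Multiset.replicate (n - π.support.card) 1

def numCycles (n : ℕ) (π : Equiv.Perm (Fin n)) : ℕ := Multiset.card (fullCycleType n π)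

def numOddCycles (n : ℕ) (π : Equiv.Perm (Fin n)) : ℕ :=
  Multiset.card ((fullCycleType n π).filter fun p => p % 2 = 1)

def IsCyclicPerm (n : ℕ) (π : Equiv.Perm (Fin n)) : Prop :=
  fullCycleType n π = {n}

def cyclicSet (n : ℕ) : Finset (Equiv.Perm (Fin n)) :=
  Finset.univ.filter fun π => IsCyclicPerm n π

def invSet (n : ℕ) : Finset (Equiv.Perm (Fin n)) :=
  Finset.univ.filter fun π => π ^ 2 = 1

def eulerianA (m : ℕ) : Polynomial ℚ :=
  ∑ π : Equiv.Perm (Fin m), Polynomial.X ^ (des m π + 1)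

def peakP (m : ℕ) : Polynomial ℚ :=
  ∑ π : Equiv.Perm (Fin m), Polynomial.X ^ (pk m π + 1)

def leftPeakP (m : ℕ) : Polynomial ℚ :=
  ∑ π : Equiv.Perm (Fin m), Polynomial.X ^ (lpk m π)

def cnk (n k : ℕ) : ℕ :=
  (Finset.univ.filter fun π : Equiv.Perm (Fin n) =>
    (∀ p ∈ fullCycleType n π, ¬ (4 ∣ p)) ∧ numCycles n (π ^ 2) = k).card

def bnk (n k : ℕ) : ℕ :=
  (Finset.univ.filter fun π : Equiv.Perm (Fin n) => numCycles n (π ^ 2) = k).card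

def dnk (n k : ℕ) : ℕ :=
  (Finset.univ.filter fun π : Equiv.Perm (Fin n) => numOddCycles n (π ^ 2) = k).card

/-!
Take the alphabet `{0, …, 2k - 1}`, call the even letters negative and give them the weight `y`. A
word `w` is compatible with `π` if it is weakly increasing and `π` increases along its blocks of
equal positive letters and decreases along its blocks of equal negative letters. A transfer
computation over the last letter shows that the weighted numbers of words compatible with `π` have
generating function `X * P / (1 - X) ^ (n + 1)`, where `P` is a product of one local factor for each
step of `π`; at `X = t` this product is, up to powers of `1 + y` and `1 + y * t`, the monomial in
`pk π` and `des π`.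

When `π` runs over the cycles `(σ 0, …, σ (n - 1))`, the compatible words become circular words `W`
sorted by `σ`. Such a `σ` is determined by its restriction to the periods of `W`: there is one if
`W` is primitive, there are two if `W` is the square of a primitive word of sign `-1`, and none
otherwise. Written as a Möbius sum over the periods of `W`, this count gives
`∑ d ∣ n, μ(d) (k (1 - (-y) ^ d)) ^ (n / d)`, and Worpitzky's identity `∑ k ^ m X ^ k =
A_m(X) / (1 - X) ^ (m + 1)`, which is the case `y = 0` of the first computation summed over all
permutations, turns the powers of `k` into Eulerian polynomials.
-/

section Sorting

theorem existsUnique_equiv_fin_lt_iff {α β : Type*} [Fintype α] [LinearOrder β] {n : ℕ}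
    (hn : Fintype.card α = n) {f : α → β} (hf : Function.Injective f) :
    ∃! σ : α ≃ Fin n, ∀ a b, σ a < σ b ↔ f a < f b := by
  let _ : LinearOrder α := LinearOrder.lift' f hf
  let e : Fin n ≃o α := Fintype.orderIsoFinOfCardEq α hn
  refine ⟨e.symm.toEquiv, fun a b => e.symm.lt_iff_lt, fun σ hσ => ?_⟩
  have hσ' : StrictMono σ := fun a b hab => (hσ a b).2 hab
  let e' : α ≃o Fin n := hσ'.orderIsoOfSurjective σ σ.surjective
  have he : e'.symm = e := Subsingleton.elim _ _
  ext a
  rw [← he]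
  rfl

theorem strictMono_comp_symm_iff {α β γ : Type*} [LinearOrder β] [Preorder γ] (σ : α ≃ β)
    (f : α → γ) : StrictMono (f ∘ σ.symm) ↔ ∀ a b, σ a < σ b ↔ f a < f b := by
  refine ⟨fun h a b => ?_, fun h i j hij => ?_⟩
  · simpa using (h.lt_iff_lt (a := σ a) (b := σ b)).symm
  · simpa [hij] using h (σ.symm i) (σ.symm j)

end Sorting

section CompatibleWords

variable {n L : ℕ} {R : Type*} [CommSemiring R]

/-- A word `w` over the alphabet `Fin L`, whose letters carry signs `s`, is compatible with `π` if
it is weakly increasing and, along each block of equal letters, `π` increases when the letter is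
positive and decreases when it is negative. -/
def IsCompatible (s : Fin L → ℤˣ) (π : Equiv.Perm (Fin n)) (w : Fin n → Fin L) : Prop :=
  StrictMono fun i => toLex (w i, (s (w i) : ℤ) * ((π i : ℕ) : ℤ))

/-- The generating function of the words compatible with `π`, each letter `c` being weighted by
`u c`. -/
def wordEnumerator (s : Fin L → ℤˣ) (u : Fin L → R) (π : Equiv.Perm (Fin n)) : R :=
  ∑ w : Fin n → Fin L, if IsCompatible s π w then ∏ i, u (w i) else 0

theorem injective_toLex_sign_mul {α : Type*} (s : Fin L → ℤˣ) (v : α → Fin L) {g : α → ℤ}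
    (hg : Function.Injective g) :
    Function.Injective fun a => toLex (v a, (s (v a) : ℤ) * g a) := by
  intro a b hab
  obtain ⟨hv, hsg⟩ := Prod.mk.inj (toLex_inj.1 hab)
  rw [hv] at hsg
  exact hg (mul_left_cancel₀ (s (v b)).ne_zero hsg)

theorem existsUnique_isCompatible_comp (s : Fin L → ℤˣ) (v : Fin n → Fin L) :
    ∃! π : Equiv.Perm (Fin n), IsCompatible s π (v ∘ π) := by
  have hinj := injective_toLex_sign_mul s v (Nat.cast_injective.comp Fin.val_injective)
  have hiff (π : Equiv.Perm (Fin n)) : IsCompatible s π (v ∘ π) ↔ ∀ i j, π.symm i < π.symm j ↔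
      toLex (v i, (s (v i) : ℤ) * ((i : ℕ) : ℤ)) < toLex (v j, (s (v j) : ℤ) * ((j : ℕ) : ℤ)) :=
    strictMono_comp_symm_iff π.symm fun i => toLex (v i, (s (v i) : ℤ) * ((i : ℕ) : ℤ))
  obtain ⟨σ, hσ, huniq⟩ := existsUnique_equiv_fin_lt_iff (Fintype.card_fin n) hinj
  exact ⟨σ.symm, (hiff _).2 hσ, fun π hπ => by rw [← huniq _ ((hiff π).1 hπ), Equiv.symm_symm]⟩

theorem sum_perm_wordEnumerator (s : Fin L → ℤˣ) (u : Fin L → R) :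
    ∑ π : Equiv.Perm (Fin n), wordEnumerator s u π = (∑ c, u c) ^ n := by
  calc ∑ π : Equiv.Perm (Fin n), wordEnumerator s u π
      = ∑ π : Equiv.Perm (Fin n), ∑ v : Fin n → Fin L,
          if IsCompatible s π (v ∘ π) then ∏ i, u (v i) else 0 := by
        refine Finset.sum_congr rfl fun π _ => ?_
        refine (Fintype.sum_equiv (π.symm.arrowCongr (Equiv.refl _)) _ _ fun v => ?_).symm
        exact if_congr Iff.rfl (Equiv.prod_comp π fun i => u (v i)).symm rfl
    _ = ∑ v : Fin n → Fin L, ∏ i, u (v i) := by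
        rw [Finset.sum_comm]
        refine Finset.sum_congr rfl fun v _ => ?_
        obtain ⟨π, hπ, huniq⟩ := existsUnique_isCompatible_comp s v
        rw [Fintype.sum_eq_single π fun ρ hρ => if_neg fun h => hρ (huniq ρ h), if_pos hπ]
    _ = (∑ c, u c) ^ n := (Fintype.sum_pow u n).symm

end CompatibleWords

section CircularWords

open Function Finset

variable {n L : ℕ}

/-- The product of the signs of the `j` letters of the circular word `W` read from position `a`. -/
def prefixSign (s : Fin L → ℤˣ) (W : ZMod n → Fin L) (j : ℕ) (a : ZMod n) : ℤˣ :=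
  ∏ i ∈ range j, s (W (a + i))

/-- The itinerary of `a` in the circular word `W`: each letter read from position `a` on is
multiplied by the product of the signs before it, which makes the order of itineraries
lexicographic. -/
def signedItinerary (s : Fin L → ℤˣ) (W : ZMod n → Fin L) (a : ZMod n) : Lex (ℕ → ℤ) :=
  toLex fun j => (prefixSign s W j a : ℤ) * (W (a + j) : ℕ)

/-- The cyclic permutation written `(σ 0, σ 1, …, σ (n - 1))` in cycle notation. -/
def cyclePerm (σ : ZMod n ≃ Fin n) : Equiv.Perm (Fin n) :=
  σ.permCongr (Equiv.addRight 1)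

/-- `σ` sorts the positions of the circular word `W` by their letters, ties being broken by the
order of the following positions, reversed at negative letters. -/
def IsStandardization (s : Fin L → ℤˣ) (W : ZMod n → Fin L) (σ : ZMod n ≃ Fin n) : Prop :=
  ∀ a b, σ a < σ b ↔ toLex (W a, (s (W a) : ℤ) * (σ (a + 1) : ℕ)) <
    toLex (W b, (s (W b) : ℤ) * (σ (b + 1) : ℕ))

variable {s : Fin L → ℤˣ} {W : ZMod n → Fin L} {σ τ : ZMod n ≃ Fin n}

theorem isCompatible_cyclePerm_iff :
    IsCompatible s (cyclePerm σ) (W ∘ σ.symm) ↔ IsStandardization s W σ := by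
  rw [IsStandardization, ← strictMono_comp_symm_iff, IsCompatible]
  simp [comp_def, cyclePerm, Equiv.permCongr_apply]

theorem prefixSign_succ (s : Fin L → ℤˣ) (W : ZMod n → Fin L) (j : ℕ) (a : ZMod n) :
    prefixSign s W (j + 1) a = prefixSign s W j a * s (W (a + j)) :=
  prod_range_succ _ _

theorem prefixSign_add (s : Fin L → ℤˣ) (W : ZMod n → Fin L) (i j : ℕ) (a : ZMod n) :
    prefixSign s W (i + j) a = prefixSign s W i a * prefixSign s W j (a + i) := by
  simp only [prefixSign, prod_range_add, Nat.cast_add, add_assoc]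

theorem prefixSign_succ' (s : Fin L → ℤˣ) (W : ZMod n → Fin L) (j : ℕ) (a : ZMod n) :
    prefixSign s W (j + 1) a = s (W a) * prefixSign s W j (a + 1) := by
  rw [add_comm, prefixSign_add]
  simp [prefixSign]

theorem prefixSign_congr {j : ℕ} {a b : ZMod n} (h : ∀ i < j, W (a + i) = W (b + i)) :
    prefixSign s W j a = prefixSign s W j b :=
  prod_congr rfl fun i hi => by rw [h i (mem_range.1 hi)]

theorem forall_lt_signedItinerary_eq_iff {j : ℕ} {a b : ZMod n} :
    (∀ i < j, signedItinerary s W a i = signedItinerary s W b i) ↔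
      ∀ i < j, W (a + i) = W (b + i) := by
  induction j with
  | zero => simp
  | succ j ih =>
    simp only [Nat.forall_lt_succ_right, ih]
    refine and_congr_right fun h => ?_
    have hne : (prefixSign s W j b : ℤ) ≠ 0 := Units.ne_zero _
    change (prefixSign s W j a : ℤ) * _ = (prefixSign s W j b : ℤ) * _ ↔ _
    rw [prefixSign_congr h, mul_right_inj' hne, Nat.cast_inj, Fin.val_inj]

theorem signedItinerary_lt_iff {a b : ZMod n} :
    signedItinerary s W a < signedItinerary s W b ↔
      ∃ j : ℕ, (∀ i < j, W (a + i) = W (b + i)) ∧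
        (prefixSign s W j a : ℤ) * (W (a + j) : ℕ) < prefixSign s W j a * (W (b + j) : ℕ) := by
  change (∃ j, (∀ i < j, signedItinerary s W a i = signedItinerary s W b i) ∧
    signedItinerary s W a j < signedItinerary s W b j) ↔ _
  refine exists_congr fun j => ?_
  rw [forall_lt_signedItinerary_eq_iff]
  refine and_congr_right fun h => ?_
  rw [prefixSign_congr h]
  change (prefixSign s W j a : ℤ) * _ < (prefixSign s W j b : ℤ) * _ ↔ _
  rw [prefixSign_congr h]

theorem periodic_sub_of_signedItinerary_eq [NeZero n] {a b : ZMod n}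
    (h : signedItinerary s W a = signedItinerary s W b) : Periodic W (b - a) := by
  intro x
  have hx : W (a + (x - a).val) = W (b + (x - a).val) :=
    forall_lt_signedItinerary_eq_iff.1 (fun i _ => congrFun h i) _ (Nat.lt_succ_self _)
  rw [ZMod.natCast_zmod_val] at hx
  rw [← add_sub_cancel a x, hx]
  congr 1
  ring

namespace IsStandardization

theorem lt_iff_of_eq (hσ : IsStandardization s W σ) {a b : ZMod n} (h : W a = W b) :
    σ a < σ b ↔ (s (W a) : ℤ) * (σ (a + 1) : ℕ) < s (W a) * (σ (b + 1) : ℕ) := by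
  simp [hσ a b, Prod.Lex.toLex_lt_toLex, h]

theorem lt_iff_of_forall_lt_eq (hσ : IsStandardization s W σ) {j : ℕ} {a b : ZMod n}
    (h : ∀ i < j, W (a + i) = W (b + i)) :
    σ a < σ b ↔
      (prefixSign s W j a : ℤ) * (σ (a + j) : ℕ) < prefixSign s W j a * (σ (b + j) : ℕ) := by
  induction j with
  | zero => simp [prefixSign]
  | succ j ih =>
    rw [ih fun i hi => h i (hi.trans j.lt_succ_self), prefixSign_succ, Nat.cast_succ, ← add_assoc,
      ← add_assoc]
    have hj := h j j.lt_succ_self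
    have hab := hσ.lt_iff_of_eq hj
    have hba := hσ.lt_iff_of_eq hj.symm
    rw [← hj] at hba
    rcases Int.units_eq_one_or (prefixSign s W j a) with he | he <;> simp [he, hab, hba]

theorem lt_of_signedItinerary_lt (hσ : IsStandardization s W σ) {a b : ZMod n}
    (h : signedItinerary s W a < signedItinerary s W b) : σ a < σ b := by
  obtain ⟨j, heq, hlt⟩ := signedItinerary_lt_iff.1 h
  have hlet : ∀ {x y : ZMod n}, W x < W y → σ x < σ y := fun hxy =>
    (hσ _ _).2 (Prod.Lex.toLex_lt_toLex.2 (Or.inl hxy))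
  rw [hσ.lt_iff_of_forall_lt_eq heq]
  rcases Int.units_eq_one_or (prefixSign s W j a) with he | he
  · simpa [he] using hlet (by simpa [he] using hlt)
  · simpa [he] using hlet (by simpa [he] using hlt)

theorem lt_iff_of_periodic [NeZero n] (hσ : IsStandardization s W σ) {h : ZMod n}
    (hW : Periodic W h) (a : ZMod n) :
    σ 0 < σ h ↔ (prefixSign s W a.val 0 : ℤ) * (σ a : ℕ) <
      prefixSign s W a.val 0 * (σ (a + h) : ℕ) := by
  rw [hσ.lt_iff_of_forall_lt_eq (j := a.val) fun i _ => by rw [zero_add, add_comm, hW]]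
  simp [add_comm]

theorem eq_of_forall_periodic [NeZero n] (hσ : IsStandardization s W σ)
    (hτ : IsStandardization s W τ) (h : ∀ c, Periodic W c → (σ 0 < σ c ↔ τ 0 < τ c)) : σ = τ := by
  have hlt (a b : ZMod n) : σ a < σ b ↔ τ a < τ b := by
    rcases lt_trichotomy (signedItinerary s W a) (signedItinerary s W b) with hab | hab | hab
    · simp only [hσ.lt_of_signedItinerary_lt hab, hτ.lt_of_signedItinerary_lt hab]
    · have hper := periodic_sub_of_signedItinerary_eq hab
      have hiff := (hσ.lt_iff_of_periodic hper a).symm.trans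
        ((h _ hper).trans (hτ.lt_iff_of_periodic hper a))
      rw [add_sub_cancel] at hiff
      rcases Int.units_eq_one_or (prefixSign s W a.val 0) with he | he
      · simpa [he] using hiff
      · have : σ b < σ a ↔ τ b < τ a := by simpa [he] using hiff
        rw [← not_le, ← not_le, not_iff_not, le_iff_lt_or_eq, le_iff_lt_or_eq, this,
          σ.injective.eq_iff, τ.injective.eq_iff]
    · simp only [(hσ.lt_of_signedItinerary_lt hab).not_gt, (hτ.lt_of_signedItinerary_lt hab).not_gt]
  obtain ⟨ρ, -, huniq⟩ := existsUnique_equiv_fin_lt_iff (ZMod.card n) τ.injective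
  rw [huniq σ hlt, huniq τ fun _ _ => Iff.rfl]

theorem addRight_trans (hσ : IsStandardization s W σ) {h : ZMod n} (hW : Periodic W h) :
    IsStandardization s W ((Equiv.addRight h).trans σ) := by
  intro a b
  have := hσ (a + h) (b + h)
  rwa [hW, hW, add_right_comm, add_right_comm b] at this

end IsStandardization

theorem prefixSign_add_of_periodic {c : ZMod n} (hW : Periodic W c) (j : ℕ) (a : ZMod n) :
    prefixSign s W j (a + c) = prefixSign s W j a :=
  prefixSign_congr fun i _ => by rw [add_right_comm, hW]

theorem prefixSign_eq_of_periodic_natCast [NeZero n] {j : ℕ} (hW : Periodic W (j : ZMod n))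
    (a : ZMod n) : prefixSign s W j a = prefixSign s W j 0 := by
  have hstep (b : ZMod n) : prefixSign s W j (b + 1) = prefixSign s W j b := by
    have := (prefixSign_succ' s W j b).symm.trans (prefixSign_succ s W j b)
    rw [hW, mul_comm] at this
    exact mul_right_cancel this
  have hnat (k : ℕ) : prefixSign s W j (k : ZMod n) = prefixSign s W j 0 := by
    induction k with
    | zero => simp
    | succ k ih => rw [Nat.cast_succ, hstep, ih]
  simpa using hnat a.val

theorem prefixSign_mul_of_periodic {j : ℕ} (hW : Periodic W (j : ZMod n)) (k : ℕ) :
    prefixSign s W (j * k) 0 = prefixSign s W j 0 ^ k := by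
  induction k with
  | zero => simp [prefixSign]
  | succ k ih =>
    have hjk : Periodic W ((j * k : ℕ) : ZMod n) := by
      rw [Nat.cast_mul, mul_comm]
      exact hW.nat_mul k
    rw [Nat.mul_succ, prefixSign_add, ih, prefixSign_add_of_periodic hjk, pow_succ]

theorem prefixSign_val_natCast (h : prefixSign s W n 0 = 1) (k : ℕ) :
    prefixSign s W (k : ZMod n).val 0 = prefixSign s W k 0 := by
  have hn : Periodic W (n : ZMod n) := by simp [Periodic]
  have hnk : prefixSign s W (n * (k / n)) 0 = 1 := by
    rw [prefixSign_mul_of_periodic hn, h, one_pow]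
  conv_rhs => rw [← Nat.div_add_mod k n, prefixSign_add, hnk]
  simp [ZMod.val_natCast]

theorem toLex_lt_toLex_iff_of_zero_eq {x y : ℕ → ℤ} (h : x 0 = y 0) :
    toLex x < toLex y ↔ toLex (fun j => x (j + 1)) < toLex fun j => y (j + 1) := by
  change (∃ j, (∀ i < j, x i = y i) ∧ x j < y j) ↔
    ∃ j, (∀ i < j, x (i + 1) = y (i + 1)) ∧ x (j + 1) < y (j + 1)
  constructor
  · rintro ⟨_ | j, heq, hlt⟩
    · exact absurd h hlt.ne
    · exact ⟨j, fun i hi => heq _ (Nat.succ_lt_succ hi), hlt⟩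
  · rintro ⟨j, heq, hlt⟩
    exact ⟨j + 1, Nat.forall_lt_succ_left.2 ⟨h, heq⟩, hlt⟩

theorem signedItinerary_succ (s : Fin L → ℤˣ) (W : ZMod n → Fin L) (a : ZMod n) (j : ℕ) :
    signedItinerary s W a (j + 1) = (s (W a) • signedItinerary s W (a + 1)) j := by
  change (prefixSign s W (j + 1) a : ℤ) * (W (a + (j + 1 : ℕ)) : ℕ) =
    s (W a) • ((prefixSign s W j (a + 1) : ℤ) * (W (a + 1 + j) : ℕ))
  rw [prefixSign_succ', Nat.cast_succ, add_assoc, add_comm (1 : ZMod n), Units.smul_def,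
    Units.val_mul, smul_eq_mul, mul_assoc]

theorem signedItinerary_lt_of_lt {a b : ZMod n} (h : W a < W b) :
    signedItinerary s W a < signedItinerary s W b :=
  signedItinerary_lt_iff.2 ⟨0, by simp, by simpa [prefixSign] using h⟩

theorem signedItinerary_lt_iff_of_eq {a b : ZMod n} (h : W a = W b) :
    signedItinerary s W a < signedItinerary s W b ↔
      s (W a) • signedItinerary s W (a + 1) < s (W a) • signedItinerary s W (b + 1) := by
  refine (toLex_lt_toLex_iff_of_zero_eq (by simp [h, prefixSign])).trans ?_
  have ha : (fun j => signedItinerary s W a (j + 1)) = s (W a) • signedItinerary s W (a + 1) :=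
    funext (signedItinerary_succ s W a)
  have hb : (fun j => signedItinerary s W b (j + 1)) = s (W b) • signedItinerary s W (b + 1) :=
    funext (signedItinerary_succ s W b)
  rw [h, ← hb, ← h, ← ha]
  rfl

theorem exists_isStandardization_of_order {G : Type*} [AddCommGroup G] [LinearOrder G]
    [IsOrderedAddMonoid G] [NeZero n] {K : ZMod n → G} (hK : Injective K)
    (hlt : ∀ a b, W a < W b → K a < K b)
    (heq : ∀ a b, W a = W b → (K a < K b ↔ s (W a) • K (a + 1) < s (W a) • K (b + 1))) :
    ∃ σ, IsStandardization s W σ := by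
  obtain ⟨σ, hσ, -⟩ := existsUnique_equiv_fin_lt_iff (ZMod.card n) hK
  refine ⟨σ, fun a b => ?_⟩
  rw [hσ, Prod.Lex.toLex_lt_toLex]
  rcases lt_trichotomy (W a) (W b) with h | h | h
  · simp [h, hlt a b h]
  · simp only [heq a b h, h, lt_irrefl, true_and, false_or]
    rcases Int.units_eq_one_or (s (W b)) with hs | hs <;> simp [hs, hσ]
  · simp [h.not_gt, h.ne', (hlt b a h).not_gt]

theorem exists_isStandardization [NeZero n] {ε : ZMod n → ℤ}
    (hε : ∀ a, ε a = s (W a) • ε (a + 1))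
    (hinj : ∀ a b, Periodic W (b - a) → ε a = ε b → a = b) : ∃ σ, IsStandardization s W σ := by
  refine exists_isStandardization_of_order (K := fun a => toLex (signedItinerary s W a, ε a))
    (fun a b hab => ?_) (fun a b hab => ?_) fun a b hab => ?_
  · obtain ⟨hitin, hεab⟩ := Prod.mk.inj (toLex_inj.1 hab)
    exact hinj a b (periodic_sub_of_signedItinerary_eq hitin) hεab
  · exact Prod.Lex.toLex_lt_toLex.2 (Or.inl (signedItinerary_lt_of_lt hab))
  · change _ ↔ toLex (s (W a) • signedItinerary s W (a + 1), s (W a) • ε (a + 1)) <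
      toLex (s (W a) • signedItinerary s W (b + 1), s (W a) • ε (b + 1))
    have hlt := signedItinerary_lt_iff_of_eq (s := s) hab
    have hgt := signedItinerary_lt_iff_of_eq (s := s) hab.symm
    have hεb := hε b
    rw [← hab] at hgt hεb
    simp only [Prod.Lex.toLex_lt_toLex, eq_iff_eq_of_lt_iff_lt_of_gt_iff_gt hlt hgt, hε a, hεb]
    exact or_congr_left hlt

theorem IsStandardization.natCast_eq_zero [NeZero n] (hσ : IsStandardization s W σ) {j : ℕ}
    (hW : Periodic W (j : ZMod n)) (hj : prefixSign s W j 0 = 1) : (j : ZMod n) = 0 := by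
  obtain ⟨a, ha⟩ := Finite.exists_max σ
  have hiff := hσ.lt_iff_of_forall_lt_eq (j := j) (a := a - j) (b := a) fun i _ => by
    rw [← hW, add_right_comm, sub_add_cancel]
  rw [prefixSign_eq_of_periodic_natCast hW, hj] at hiff
  have hle : ¬ σ (a - j) < σ a := by simpa [hiff] using ha (a + j)
  simpa using σ.injective ((ha _).eq_of_not_lt hle)

end CircularWords

open ArithmeticFunction in
theorem sum_moebius_mul_intUnits_pow (e : ℤˣ) {m : ℕ} (hm : 0 < m) :
    ∑ d ∈ m.divisors, (moebius d : ℤ) * (e : ℤ) ^ (m / d) =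
      (if m = 1 then (e : ℤ) else 0) + if m = 2 then 1 - (e : ℤ) else 0 := by
  have hsum (i : ℕ) (hi : 0 < i) : ∑ j ∈ i.divisors,
      ((if j = 1 then (e : ℤ) else 0) + if j = 2 then 1 - (e : ℤ) else 0) = (e : ℤ) ^ i := by
    rw [Finset.sum_add_distrib, Finset.sum_ite_eq', Finset.sum_ite_eq']
    rcases Int.units_eq_one_or e with rfl | rfl
    · simp [hi.ne']
    · rcases Nat.even_or_odd i with h | h
      · simp [hi.ne', h.neg_one_pow, h.two_dvd]
      · simp [hi.ne', h.neg_one_pow, h.not_two_dvd_nat]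
  rw [← sum_eq_iff_sum_mul_moebius_eq.1 hsum m hm]
  exact (Nat.sum_divisorsAntidiagonal fun d j => (moebius d : ℤ) * (e : ℤ) ^ j).symm

section CountingStandardizations

open Function Finset

variable {n L : ℕ}

theorem exists_periodic_natCast_iff_dvd {ι : Type*} (W : ZMod n → ι) :
    ∃ p : ℕ, ∀ j : ℕ, Periodic W (j : ZMod n) ↔ p ∣ j := by
  let shift : (ZMod n → ι) → ZMod n → ι := fun f a => f (a + 1)
  have hshift (j : ℕ) : shift^[j] W = fun a => W (a + j) := by
    induction j with
    | zero => simp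
    | succ j ih =>
      simp only [iterate_succ_apply', ih, shift, Nat.cast_succ, add_right_comm, add_assoc]
  refine ⟨minimalPeriod shift W, fun j => ?_⟩
  rw [← isPeriodicPt_iff_minimalPeriod_dvd, IsPeriodicPt, IsFixedPt, hshift, funext_iff]
  rfl

variable {s : Fin L → ℤˣ} {W : ZMod n → Fin L} [NeZero n]

theorem card_isStandardization_eq_one (hW : ∀ c, Periodic W c → c = 0) :
    #{σ | IsStandardization s W σ} = 1 := by
  obtain ⟨σ, hσ⟩ := exists_isStandardization (s := s) (W := W) (ε := 0) (by simp)
    fun a b hab _ => (sub_eq_zero.1 (hW _ hab)).symm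
  refine card_eq_one.2 ⟨σ, eq_singleton_iff_unique_mem.2 ⟨by simpa using hσ, fun τ hτ => ?_⟩⟩
  refine (mem_filter_univ _).1 hτ |>.eq_of_forall_periodic hσ fun c hc => ?_
  simp [hW c hc]

theorem periodic_iff_of_eq_mul_two {p : ℕ} (hn : n = p * 2)
    (hp : ∀ j : ℕ, Periodic W (j : ZMod n) ↔ p ∣ j) (c : ZMod n) :
    Periodic W c ↔ c = 0 ∨ c = p := by
  constructor
  · intro hc
    obtain ⟨k, hk⟩ := (hp c.val).1 (by simpa using hc)
    have hk2 : p * k < p * 2 := by rw [← hk, ← hn]; exact c.val_lt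
    replace hk2 := lt_of_mul_lt_mul_left hk2 p.zero_le
    rw [← ZMod.natCast_zmod_val c, hk]
    interval_cases k <;> simp
  · rintro (rfl | rfl)
    · simp [Periodic]
    · exact (hp p).2 dvd_rfl

theorem exists_isStandardization_of_prefixSign_eq_neg_one {p : ℕ} (hn : n = p * 2)
    (hp : ∀ c, Periodic W c ↔ c = 0 ∨ c = p) (he : prefixSign s W p 0 = -1) :
    ∃ σ, IsStandardization s W σ := by
  have hper : Periodic W (p : ZMod n) := (hp _).2 (Or.inr rfl)
  have hone : prefixSign s W n 0 = 1 := by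
    have := prefixSign_mul_of_periodic (s := s) hper 2
    rwa [← hn, he, Int.units_sq] at this
  refine exists_isStandardization (ε := fun a => (prefixSign s W a.val 0 : ℤ)) (fun a => ?_)
    fun a b hab hε => ?_
  · have ha := prefixSign_val_natCast hone (a.val + 1)
    rw [Nat.cast_succ, prefixSign_succ, ZMod.natCast_zmod_val, zero_add] at ha
    rw [ha, Units.smul_def, smul_eq_mul, ← Units.val_mul, mul_left_comm, Int.units_mul_self,
      mul_one]
  · rcases (hp _).1 hab with h | h
    · exact (sub_eq_zero.1 h).symm
    · have hb := prefixSign_val_natCast hone (p + a.val)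
      rw [prefixSign_add, he, prefixSign_add_of_periodic hper, Nat.cast_add, ZMod.natCast_zmod_val,
        ← h, sub_add_cancel, neg_one_mul] at hb
      rw [hb, Units.val_neg, self_eq_neg] at hε
      exact absurd hε (Units.ne_zero _)

theorem card_isStandardization_eq_two {p : ℕ} (hn : n = p * 2)
    (hp : ∀ c, Periodic W c ↔ c = 0 ∨ c = p) (he : prefixSign s W p 0 = -1) :
    #{σ | IsStandardization s W σ} = 2 := by
  obtain ⟨σ, hσ⟩ := exists_isStandardization_of_prefixSign_eq_neg_one hn hp he
  have hper : Periodic W (p : ZMod n) := (hp _).2 (Or.inr rfl)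
  have hpp : (p : ZMod n) + p = 0 := by rw [← Nat.cast_add, ← mul_two, ← hn, ZMod.natCast_self]
  have hp0 : (p : ZMod n) ≠ 0 := by
    rw [Ne, ZMod.natCast_eq_zero_iff, hn]
    have := NeZero.pos n
    exact Nat.not_dvd_of_pos_of_lt (by omega) (by omega)
  set τ : ZMod n ≃ Fin n := (Equiv.addRight (p : ZMod n)).trans σ
  have hτ : IsStandardization s W τ := hσ.addRight_trans hper
  have hτ0 : τ 0 < τ p ↔ ¬ σ 0 < σ p := by
    have : σ p ≠ σ 0 := σ.injective.ne hp0
    simp only [τ, Equiv.trans_apply, Equiv.coe_addRight, zero_add, hpp, not_lt]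
    exact this.le_iff_lt.symm
  refine card_eq_two.2 ⟨σ, τ, fun h => ?_, ?_⟩
  · rw [← h] at hτ0
    exact iff_not_self hτ0
  · ext ρ
    rw [mem_filter_univ, mem_insert, mem_singleton]
    refine ⟨fun hρ => ?_, by rintro (rfl | rfl) <;> assumption⟩
    by_cases h : ρ 0 < ρ p ↔ σ 0 < σ p
    · refine Or.inl (hρ.eq_of_forall_periodic hσ fun c hc => ?_)
      rcases (hp c).1 hc with rfl | rfl <;> simp [h]
    · refine Or.inr (hρ.eq_of_forall_periodic hτ fun c hc => ?_)
      rcases (hp c).1 hc with rfl | rfl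
      · simp
      · rw [hτ0]
        tauto

theorem card_isStandardization_eq_zero {j : ℕ} (hW : Periodic W (j : ZMod n))
    (hj : prefixSign s W j 0 = 1) (hj0 : ¬ n ∣ j) : #{σ | IsStandardization s W σ} = 0 := by
  refine card_eq_zero.2 (filter_eq_empty_iff.2 fun σ _ hσ => hj0 ?_)
  exact (ZMod.natCast_eq_zero_iff _ _).1 (hσ.natCast_eq_zero hW hj)

theorem card_isStandardization {p m : ℕ} (hn : n = p * m)
    (hp : ∀ j : ℕ, Periodic W (j : ZMod n) ↔ p ∣ j) :
    (#{σ | IsStandardization s W σ} : ℤ) =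
      (if m = 1 then 1 else 0) + if m = 2 then 1 - (prefixSign s W p 0 : ℤ) else 0 := by
  have hper (c : ZMod n) : Periodic W c ↔ p ∣ c.val := by simpa using hp c.val
  have hn0 : p * m ≠ 0 := hn ▸ NeZero.ne n
  obtain ⟨hp0, hm0⟩ := mul_ne_zero_iff.1 hn0
  have hnot {k : ℕ} (hk0 : k ≠ 0) (hkm : k < m) : ¬ n ∣ p * k := by
    rw [hn, Nat.mul_dvd_mul_iff_left (Nat.pos_of_ne_zero hp0)]
    exact Nat.not_dvd_of_pos_of_lt (Nat.pos_of_ne_zero hk0) hkm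
  have hlt (c : ZMod n) : c.val < p * m := hn ▸ c.val_lt
  rcases lt_trichotomy m 2 with hm | rfl | hm
  · obtain rfl : m = 1 := by omega
    rw [card_isStandardization_eq_one fun c hc => ?_]
    · simp
    · rw [← ZMod.val_eq_zero]
      exact Nat.eq_zero_of_dvd_of_lt ((hper c).1 hc) (by simpa using hlt c)
  · rcases Int.units_eq_one_or (prefixSign s W p 0) with he | he
    · rw [card_isStandardization_eq_zero ((hp p).2 dvd_rfl) he
        (by simpa using hnot one_ne_zero one_lt_two)]
      simp [he]
    · rw [card_isStandardization_eq_two hn (periodic_iff_of_eq_mul_two hn hp) he]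
      simp [he]
  · have hsq : prefixSign s W (p * 2) 0 = 1 := by
      rw [prefixSign_mul_of_periodic ((hp p).2 dvd_rfl), Int.units_sq]
    rw [card_isStandardization_eq_zero ((hp _).2 (dvd_mul_right p 2)) hsq (hnot two_ne_zero hm)]
    have hm1 : m ≠ 1 := by omega
    simp [hm.ne', hm1]

theorem card_isStandardization_eq_sum_moebius (s : Fin L → ℤˣ) (W : ZMod n → Fin L) :
    (#{σ | IsStandardization s W σ} : ℤ) = ∑ d ∈ n.divisors,
      if Periodic W ((n / d : ℕ) : ZMod n) then
        ArithmeticFunction.moebius d * (prefixSign s W (n / d) 0 : ℤ) ^ (d + 1) else 0 := by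
  obtain ⟨p, hp⟩ := exists_periodic_natCast_iff_dvd W
  obtain ⟨m, hn⟩ : p ∣ n := (hp n).1 (by simp [Periodic])
  have hn0 := NeZero.ne n
  obtain ⟨hp0, hm0⟩ := mul_ne_zero_iff.1 (hn ▸ hn0 : p * m ≠ 0)
  set e := prefixSign s W p 0 with he
  have hdiv {d : ℕ} (hd : d ∣ m) : n / d = p * (m / d) := by rw [hn, Nat.mul_div_assoc _ hd]
  have hiff {d : ℕ} (hd : d ∣ n) : Periodic W ((n / d : ℕ) : ZMod n) ↔ d ∣ m := by
    rw [hp, Nat.dvd_div_iff_mul_dvd hd, hn, mul_comm,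
      Nat.mul_dvd_mul_iff_left (Nat.pos_of_ne_zero hp0)]
  have hterm {d : ℕ} (hd : d ∣ m) :
      (prefixSign s W (n / d) 0 : ℤ) ^ (d + 1) = (e : ℤ) ^ m * (e : ℤ) ^ (m / d) := by
    rw [hdiv hd, prefixSign_mul_of_periodic ((hp p).2 dvd_rfl), ← he, Units.val_pow_eq_pow_val,
      ← pow_mul, Nat.mul_succ, Nat.div_mul_cancel hd, pow_add]
  calc (#{σ | IsStandardization s W σ} : ℤ)
      = (e : ℤ) ^ m * ((if m = 1 then (e : ℤ) else 0) + if m = 2 then 1 - (e : ℤ) else 0) := by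
        rw [card_isStandardization hn hp, mul_add]
        congr 1 <;> split_ifs with h <;> simp [h, he, sq]
    _ = ∑ d ∈ m.divisors,
          ArithmeticFunction.moebius d * (prefixSign s W (n / d) 0 : ℤ) ^ (d + 1) := by
        rw [← sum_moebius_mul_intUnits_pow e (Nat.pos_of_ne_zero hm0), mul_sum]
        refine sum_congr rfl fun d hd => ?_
        rw [hterm (Nat.dvd_of_mem_divisors hd), mul_left_comm]
    _ = _ := by
        rw [← Nat.divisors_filter_dvd_of_dvd hn0 (hn ▸ dvd_mul_left m p), sum_filter]
        exact sum_congr rfl fun d hd => by simp only [hiff (Nat.dvd_of_mem_divisors hd)]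

end CountingStandardizations

section PeriodicWords

open Function Finset

variable {n q d : ℕ} {ι R : Type*}

theorem prod_zmod_eq_prod_range {M : Type*} [CommMonoid M] [NeZero n] (f : ZMod n → M) :
    ∏ a, f a = ∏ i ∈ range n, f i := by
  refine prod_nbij' (fun a => a.val) (fun i => (i : ZMod n)) ?_ ?_ ?_ ?_ ?_
  · exact fun a _ => mem_range.2 a.val_lt
  · simp
  · simp
  · exact fun i hi => ZMod.val_cast_of_lt (mem_range.1 hi)
  · simp

theorem prod_range_mul_of_periodic {M : Type*} [CommMonoid M] {f : ℕ → M} (hf : Periodic f q)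
    (d : ℕ) : ∏ i ∈ range (q * d), f i = (∏ i ∈ range q, f i) ^ d := by
  induction d with
  | zero => simp
  | succ d ih =>
    have hper (i : ℕ) : f (q * d + i) = f i := by
      rw [add_comm, mul_comm]
      exact hf.nat_mul d i
    rw [Nat.mul_succ, prod_range_add, ih, pow_succ]
    simp only [hper]

theorem sum_periodic_prod_range [Fintype ι] [CommSemiring R] [NeZero n] (hq : q ∣ n) (g : ι → R) :
    ∑ W : ZMod n → ι with Periodic W (q : ZMod n), ∏ i ∈ range q, g (W i) = (∑ c, g c) ^ q := by
  have hq0 : NeZero q := ⟨ne_zero_of_dvd_ne_zero (NeZero.ne n) hq⟩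
  rw [Fintype.sum_pow]
  refine sum_nbij' (fun W (i : Fin q) => W (i : ℕ)) (fun U a => U (Fin.ofNat q a.val))
    ?_ ?_ ?_ ?_ ?_
  · simp
  · intro U _
    refine mem_filter.2 ⟨mem_univ _, fun a => congrArg U (Fin.ext ?_)⟩
    simp [ZMod.val_add, ZMod.val_natCast, Nat.mod_mod_of_dvd _ hq]
  · intro W hW
    ext a
    have := (((mem_filter_univ _).1 hW).nat_mul (a.val / q)) ((a.val % q : ℕ) : ZMod n)
    rw [← Nat.cast_mul, ← Nat.cast_add, mul_comm, Nat.mod_add_div, ZMod.natCast_zmod_val] at this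
    exact this.symm
  · intro U _
    ext i
    refine congrArg U (Fin.ext ?_)
    simp [ZMod.val_natCast, Nat.mod_mod_of_dvd _ hq, Nat.mod_eq_of_lt i.isLt]
  · exact fun W _ => (Fin.prod_univ_eq_prod_range (fun i => g (W i)) q).symm

theorem sum_periodic_mul_prefixSign {L : ℕ} [CommRing R] [NeZero n] (hn : n = q * d)
    (s : Fin L → ℤˣ) (u : Fin L → R) :
    ∑ W : ZMod n → Fin L with Periodic W (q : ZMod n),
        (∏ a, u (W a)) * ((prefixSign s W q 0 : ℤ) : R) ^ (d + 1) =
      (∑ c, u c ^ d * ((s c : ℤ) : R) ^ (d + 1)) ^ q := by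
  rw [← sum_periodic_prod_range (n := n) ⟨d, hn⟩]
  refine sum_congr rfl fun W hW => ?_
  have hu : Periodic (fun i : ℕ => u (W i)) q := fun i => by
    simp only [Nat.cast_add, (mem_filter_univ _).1 hW (i : ZMod n)]
  have hs : ((prefixSign s W q 0 : ℤ) : R) = ∏ i ∈ range q, ((s (W i) : ℤ) : R) := by
    simp [prefixSign, Units.coe_prod]
  rw [prod_zmod_eq_prod_range, hs, prod_mul_distrib, prod_pow, prod_pow,
    ← prod_range_mul_of_periodic hu, ← hn]

end PeriodicWords

section CyclicPermutations

open Function Finset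

variable {n : ℕ}

theorem cyclePerm_apply_apply (σ : ZMod n ≃ Fin n) (a : ZMod n) :
    cyclePerm σ (σ a) = σ (a + 1) := by
  simp [cyclePerm, Equiv.permCongr_apply]

theorem cyclePerm_addRight_trans (σ : ZMod n ≃ Fin n) (c : ZMod n) :
    cyclePerm ((Equiv.addRight c).trans σ) = cyclePerm σ := by
  ext i
  obtain ⟨a, rfl⟩ := ((Equiv.addRight c).trans σ).surjective i
  rw [cyclePerm_apply_apply, Equiv.trans_apply, Equiv.trans_apply, Equiv.coe_addRight,
    cyclePerm_apply_apply, add_right_comm]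

theorem fullCycleType_eq_parts_partition (π : Equiv.Perm (Fin n)) :
    fullCycleType n π = π.partition.parts := by
  rw [fullCycleType, Equiv.Perm.parts_partition, Fintype.card_fin]

variable [NeZero n]

theorem fullCycleType_finRotate : fullCycleType n (finRotate n) = {n} := by
  match n, NeZero.ne n with
  | 1, _ => simp [fullCycleType, Subsingleton.elim (finRotate 1) 1]
  | n + 2, _ => simp [fullCycleType, cycleType_finRotate, support_finRotate]

theorem mem_cyclicSet_iff_exists_cyclePerm {π : Equiv.Perm (Fin n)} :
    π ∈ cyclicSet n ↔ ∃ σ, cyclePerm σ = π := by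
  have hconj : π ∈ cyclicSet n ↔ IsConj (finRotate n) π := by
    rw [cyclicSet, mem_filter_univ, IsCyclicPerm, ← fullCycleType_finRotate,
      Equiv.Perm.partition_eq_of_isConj, Nat.Partition.ext_iff, fullCycleType_eq_parts_partition,
      fullCycleType_eq_parts_partition, eq_comm]
  rw [hconj, isConj_iff]
  obtain ⟨m, rfl⟩ := Nat.exists_eq_succ_of_ne_zero (NeZero.ne n)
  have hrot : finRotate (m + 1) = (Equiv.addRight (1 : ZMod (m + 1)) : Equiv.Perm (Fin (m + 1))) :=
    Equiv.ext finRotate_apply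
  rw [hrot]
  exact exists_congr fun σ => by rw [← Equiv.permCongr_eq_mul]; rfl

theorem cyclePerm_eq_cyclePerm_iff {σ τ : ZMod n ≃ Fin n} :
    cyclePerm τ = cyclePerm σ ↔ ∃ c, (Equiv.addRight c).trans σ = τ := by
  refine ⟨fun h => ⟨σ.symm (τ 0), ?_⟩, ?_⟩
  · have hnat (k : ℕ) : σ (k + σ.symm (τ 0)) = τ k := by
      induction k with
      | zero => simp
      | succ k ih =>
        rw [Nat.cast_succ, ← cyclePerm_apply_apply τ, h, ← ih, cyclePerm_apply_apply,
          add_right_comm]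
    ext a
    simpa using congrArg Fin.val (hnat a.val)
  · rintro ⟨c, rfl⟩
    exact cyclePerm_addRight_trans σ c

theorem card_filter_cyclePerm_eq (σ : ZMod n ≃ Fin n) : #{τ | cyclePerm τ = cyclePerm σ} = n := by
  have himage : ({τ | cyclePerm τ = cyclePerm σ} : Finset (ZMod n ≃ Fin n)) =
      univ.image fun c => (Equiv.addRight c).trans σ := by
    ext τ
    simp [cyclePerm_eq_cyclePerm_iff]
  rw [himage, card_image_of_injective, card_univ, ZMod.card]
  intro c c' h
  simpa using congrArg (· 0) h

theorem sum_cyclePerm {M : Type*} [AddCommMonoid M] (f : Equiv.Perm (Fin n) → M) :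
    ∑ σ : ZMod n ≃ Fin n, f (cyclePerm σ) = n • ∑ π ∈ cyclicSet n, f π := by
  have himage : univ.image cyclePerm = cyclicSet n := by
    ext π
    simp [mem_cyclicSet_iff_exists_cyclePerm]
  rw [sum_comp, himage, smul_sum]
  refine sum_congr rfl fun π hπ => ?_
  obtain ⟨σ, rfl⟩ := mem_cyclicSet_iff_exists_cyclePerm.1 hπ
  rw [card_filter_cyclePerm_eq]

variable {L : ℕ} {R : Type*}

theorem sum_wordEnumerator_cyclePerm [CommRing R] (s : Fin L → ℤˣ) (u : Fin L → R) :
    ∑ σ : ZMod n ≃ Fin n, wordEnumerator s u (cyclePerm σ) =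
      ∑ W : ZMod n → Fin L, (#{σ | IsStandardization s W σ} : R) * ∏ a, u (W a) := by
  have hword (σ : ZMod n ≃ Fin n) : wordEnumerator s u (cyclePerm σ) =
      ∑ W : ZMod n → Fin L, if IsStandardization s W σ then ∏ a, u (W a) else 0 := by
    refine (Fintype.sum_equiv (σ.arrowCongr (Equiv.refl _)) _ _ fun W => ?_).symm
    exact if_congr isCompatible_cyclePerm_iff.symm
      (Equiv.prod_comp σ.symm fun a => u (W a)).symm rfl
  simp only [hword]
  rw [sum_comm]
  simp only [← sum_filter, sum_const, nsmul_eq_mul]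

theorem sum_cyclicSet_wordEnumerator [CommRing R] (s : Fin L → ℤˣ) (u : Fin L → R) :
    (n : R) * ∑ π ∈ cyclicSet n, wordEnumerator s u π =
      ∑ d ∈ n.divisors, ((ArithmeticFunction.moebius d : ℤ) : R) *
        (∑ c, u c ^ d * ((s c : ℤ) : R) ^ (d + 1)) ^ (n / d) := by
  have hcard (W : ZMod n → Fin L) := congrArg (Int.cast : ℤ → R)
    (card_isStandardization_eq_sum_moebius s W)
  push_cast at hcard
  rw [← nsmul_eq_mul, ← sum_cyclePerm, sum_wordEnumerator_cyclePerm]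
  simp only [hcard, sum_mul]
  rw [sum_comm]
  refine sum_congr rfl fun d hd => ?_
  have hn : n = n / d * d := (Nat.div_mul_cancel (Nat.dvd_of_mem_divisors hd)).symm
  rw [← sum_periodic_mul_prefixSign hn, mul_sum, sum_filter]
  refine sum_congr rfl fun W _ => ?_
  split_ifs <;> ring

end CyclicPermutations

section Transfer

open Finset

variable {ι R : Type*}

/-- The total weight of the walks `b₀, …, b_m = c` with `r i b_i b_{i+1}` for all `i < m`, a walk
being weighted by the product of the weights `u` of its vertices. -/
def walkSum [Fintype ι] [CommSemiring R] (u : ι → R) (r : ℕ → ι → ι → Prop) : ℕ → ι → R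
  | 0, c => u c
  | m + 1, c => u c * ∑ b, if r m b c then walkSum u r m b else 0

theorem sum_walk_mul_eq_sum_walkSum_mul [Fintype ι] [CommSemiring R] (u : ι → R)
    (r : ℕ → ι → ι → Prop) (m : ℕ) (h : ι → R) :
    (∑ w : Fin (m + 1) → ι, if ∀ i : Fin m, r i (w i.castSucc) (w i.succ) then
      (∏ i, u (w i)) * h (w (Fin.last m)) else 0) = ∑ c, walkSum u r m c * h c := by
  induction m generalizing h with
  | zero =>
    rw [← (Equiv.funUnique (Fin 1) ι).symm.sum_comp]
    simp [walkSum]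
  | succ m ih =>
    have hsnoc (c : ι) (w : Fin (m + 1) → ι) : (∀ i : Fin (m + 1), r i
        (Fin.snoc (α := fun _ => ι) w c i.castSucc) (Fin.snoc (α := fun _ => ι) w c i.succ)) ↔
        (∀ i : Fin m, r i (w i.castSucc) (w i.succ)) ∧ r m (w (Fin.last m)) c := by
      simp [Fin.forall_fin_succ', ← Fin.castSucc_succ]
    rw [← (Fin.snocEquiv fun _ => ι).sum_comp, Fintype.sum_prod_type]
    refine sum_congr rfl fun c _ => ?_
    have hlast := ih fun b => if r m b c then u c * h c else 0
    calc ∑ w : Fin (m + 1) → ι, _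
        = ∑ b, walkSum u r m b * if r m b c then u c * h c else 0 := by
          rw [← hlast]
          refine sum_congr rfl fun w _ => ?_
          simp only [Fin.snocEquiv_apply, hsnoc]
          simp only [Fin.prod_univ_castSucc, Fin.snoc_castSucc, Fin.snoc_last, ite_and, mul_ite,
            mul_zero, mul_assoc]
      _ = walkSum u r (m + 1) c * h c := by
          rw [walkSum, mul_sum, sum_mul]
          refine sum_congr rfl fun b _ => ?_
          split_ifs <;> ring

theorem isCompatible_iff_forall_succ {m L : ℕ} {s : Fin L → ℤˣ} {π : Equiv.Perm (Fin (m + 1))}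
    {w : Fin (m + 1) → Fin L} : IsCompatible s π w ↔ ∀ i : Fin m, w i.castSucc < w i.succ ∨
      w i.castSucc = w i.succ ∧ (s (w i.succ) = -1 ↔ π i.succ < π i.castSucc) := by
  rw [IsCompatible, Fin.strictMono_iff_lt_succ]
  refine forall_congr' fun i => ?_
  rw [Prod.Lex.toLex_lt_toLex]
  refine or_congr_right (and_congr_right fun (h : w i.castSucc = w i.succ) => ?_)
  have hne : π i.castSucc ≠ π i.succ := π.injective.ne i.castSucc_lt_succ.ne
  rcases Int.units_eq_one_or (s (w i.succ)) with hs | hs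
  · simpa [h, hs] using hne.le_iff_lt.symm
  · simp [h, hs]

end Transfer

section ParityAlphabet

open Finset

variable {R : Type*}

/-- The sign of the letter `c`: the even letters are the negative ones. -/
def letterSign (c : ℕ) : ℤˣ := if Even c then -1 else 1

/-- The weight marking the negative letters by `y`. -/
def letterWeight [One R] (y : R) (c : ℕ) : R := if Even c then y else 1

/-- The sum of `∏ i, letterWeight y (b i)` over the words `b 0 ≤ ⋯ ≤ b m = c` in which
`b i = b (i + 1)` is allowed only if `b i` is even exactly when `D (i + 1)`. -/
def compatibleSum [CommSemiring R] (y : R) (D : ℕ → Prop) : ℕ → ℕ → R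
  | 0, c => letterWeight y c
  | m + 1, c => letterWeight y c *
      (∑ b ∈ range c, compatibleSum y D m b +
        if Even c ↔ D (m + 1) then compatibleSum y D m c else 0)

theorem walkSum_eq_compatibleSum [CommSemiring R] {L : ℕ} (y : R) (D : ℕ → Prop) (m : ℕ)
    (c : Fin L) :
    walkSum (fun c : Fin L => letterWeight y c)
      (fun i b c => b < c ∨ b = c ∧ (letterSign c = -1 ↔ D (i + 1))) m c =
        compatibleSum y D m c := by
  induction m generalizing c with
  | zero => rfl
  | succ m ih =>
    have hsign : letterSign c = -1 ↔ Even (c : ℕ) := by simp [letterSign]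
    have hsplit (b : Fin L) :
        (if b < c ∨ b = c ∧ (Even (c : ℕ) ↔ D (m + 1)) then compatibleSum y D m b else 0) =
        (if (b : ℕ) < c then compatibleSum y D m b else 0) +
        if b = c then (if Even (c : ℕ) ↔ D (m + 1) then compatibleSum y D m c else 0) else 0 := by
      rcases lt_trichotomy b c with h | rfl | h
      · simp [h, h.ne]
      · simp
      · simp [h.not_gt, h.ne']
    have hrange : (range L).filter (· < (c : ℕ)) = range c := by
      ext b
      simpa using fun h => h.trans c.isLt
    simp only [walkSum, ih, hsign, hsplit, sum_add_distrib, sum_ite_eq', mem_univ, if_true]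
    rw [Fin.sum_univ_eq_sum_range (fun b => if b < (c : ℕ) then compatibleSum y D m b else 0),
      ← sum_filter, hrange, compatibleSum]

theorem wordEnumerator_letter [CommSemiring R] (y : R) {m : ℕ} (π : Equiv.Perm (Fin (m + 1)))
    {D : ℕ → Prop} (hD : ∀ i : Fin m, D (i + 1) ↔ π i.succ < π i.castSucc) (L : ℕ) :
    wordEnumerator (fun c : Fin L => letterSign c) (fun c => letterWeight y c) π =
      ∑ c ∈ range L, compatibleSum y D m c := by
  simp only [wordEnumerator, isCompatible_iff_forall_succ, ← hD]
  have h := sum_walk_mul_eq_sum_walkSum_mul (fun c : Fin L => letterWeight y c)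
    (fun i b c => b < c ∨ b = c ∧ (letterSign c = -1 ↔ D (i + 1))) m 1
  simp only [Pi.one_apply, mul_one, walkSum_eq_compatibleSum] at h
  rw [h, Fin.sum_univ_eq_sum_range (compatibleSum y D m)]

theorem sum_fin_two_mul_ite_even [CommSemiring R] (a b : R) (k : ℕ) :
    ∑ c : Fin (2 * k), (if Even (c : ℕ) then a else b) = k * (a + b) := by
  rw [Fin.sum_univ_eq_sum_range fun c => if Even c then a else b]
  induction k with
  | zero => simp
  | succ k ih =>
    rw [mul_add_one, sum_range_succ, sum_range_succ, ih]
    simp [add_mul, add_assoc]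

end ParityAlphabet

section GeneratingFunctions

open Finset PowerSeries

variable {R : Type*} [CommRing R]

/-- The factor contributed by a position to the generating function of compatible words: `p` and `q`
tell whether the steps into and out of that position are descents. -/
def stepPoly (y : R) (p q : Prop) : Polynomial R :=
  (if q then Polynomial.X else 1) + Polynomial.C y * if p then 1 else Polynomial.X

/-- The generating function over `k` of `compatibleSum y D m` at the even letters `2 * k`. -/
def evenSeries (y : R) (D : ℕ → Prop) (m : ℕ) : PowerSeries R :=
  mk fun k => compatibleSum y D m (2 * k)

/-- The generating function over `k` of `compatibleSum y D m` at the odd letters `2 * k + 1`. -/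
def oddSeries (y : R) (D : ℕ → Prop) (m : ℕ) : PowerSeries R :=
  mk fun k => compatibleSum y D m (2 * k + 1)

/-- The generating function over `k` of the total of `compatibleSum y D m` on the alphabet
`{0, …, 2 * k - 1}`. -/
def totalSeries (y : R) (D : ℕ → Prop) (m : ℕ) : PowerSeries R :=
  mk fun k => ∑ c ∈ range (2 * k), compatibleSum y D m c

variable (y : R) (D : ℕ → Prop) (m : ℕ)

theorem totalSeries_mul_one_sub_X :
    totalSeries y D m * (1 - X) = X * (evenSeries y D m + oddSeries y D m) := by
  ext k
  cases k with
  | zero => simp [totalSeries]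
  | succ k =>
    rw [mul_sub, mul_one, map_sub, coeff_succ_mul_X, coeff_succ_X_mul]
    simp only [totalSeries, evenSeries, oddSeries, coeff_mk, map_add, mul_add_one]
    rw [sum_range_succ, sum_range_succ]
    ring

theorem evenSeries_succ : evenSeries y D (m + 1) =
    C y * (totalSeries y D m + if D (m + 1) then evenSeries y D m else 0) := by
  ext k
  by_cases h : D (m + 1) <;>
    simp [evenSeries, totalSeries, compatibleSum, letterWeight, h]

theorem oddSeries_succ : oddSeries y D (m + 1) =
    totalSeries y D m + evenSeries y D m + if D (m + 1) then 0 else oddSeries y D m := by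
  ext k
  by_cases h : D (m + 1) <;>
    simp [evenSeries, oddSeries, totalSeries, compatibleSum, letterWeight, h, sum_range_succ]

variable {D}

theorem evenSeries_eq (h0 : D 0) :
    evenSeries y D m = C y * (if D m then 1 else X) * oddSeries y D m := by
  cases m with
  | zero =>
    ext k
    simp [evenSeries, oddSeries, compatibleSum, letterWeight, h0]
  | succ m =>
    have hunit : IsUnit (1 - X : PowerSeries R) :=
      .of_mul_eq_one_right _ (mk_one_mul_one_sub_eq_one R)
    have htotal := totalSeries_mul_one_sub_X y D m
    refine hunit.mul_right_cancel ?_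
    rw [evenSeries_succ, oddSeries_succ]
    by_cases h : D (m + 1) <;> simp only [h, if_true, if_false]
    · ring
    · linear_combination C y * (1 - X) * htotal

theorem oddSeries_succ_mul_one_sub_X (h0 : D 0) : oddSeries y D (m + 1) * (1 - X) =
    (stepPoly y (D m) (D (m + 1)) : PowerSeries R) * oddSeries y D m := by
  have htotal := totalSeries_mul_one_sub_X y D m
  rw [evenSeries_eq y m h0] at htotal
  rw [oddSeries_succ, evenSeries_eq y m h0, stepPoly]
  by_cases h : D m <;> by_cases h' : D (m + 1) <;>
    simp only [h, h', if_true, if_false, Polynomial.coe_add, Polynomial.coe_mul, Polynomial.coe_X,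
      Polynomial.coe_C, Polynomial.coe_one] at htotal ⊢ <;>
    linear_combination htotal

theorem oddSeries_mul_one_sub_X_pow (h0 : D 0) : oddSeries y D m * (1 - X) ^ (m + 1) =
    ((∏ i ∈ range m, stepPoly y (D i) (D (i + 1)) : Polynomial R) : PowerSeries R) := by
  induction m with
  | zero =>
    have hone : oddSeries y D 0 = PowerSeries.mk 1 := by
      ext k
      simp [oddSeries, compatibleSum, letterWeight]
    rw [hone, zero_add, pow_one, mk_one_mul_one_sub_eq_one, prod_range_zero, Polynomial.coe_one]
  | succ m ih =>
    rw [pow_succ', ← mul_assoc, oddSeries_succ_mul_one_sub_X y m h0, mul_assoc, ih,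
      prod_range_succ_comm, Polynomial.coe_mul]

theorem totalSeries_mul_one_sub_X_pow (h0 : D 0) (hlast : ¬ D (m + 1)) :
    totalSeries y D m * (1 - X) ^ (m + 2) =
      ((Polynomial.X * ∏ i ∈ range (m + 1), stepPoly y (D i) (D (i + 1)) : Polynomial R) :
        PowerSeries R) := by
  rw [pow_succ', ← mul_assoc, totalSeries_mul_one_sub_X, evenSeries_eq y m h0, prod_range_succ,
    Polynomial.coe_mul, Polynomial.coe_mul, ← oddSeries_mul_one_sub_X_pow y m h0]
  by_cases h : D m <;>
    simp only [stepPoly, h, hlast, if_true, if_false, Polynomial.coe_add, Polynomial.coe_mul,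
      Polynomial.coe_X, Polynomial.coe_C, Polynomial.coe_one] <;>
    ring

end GeneratingFunctions

section Descents

open Finset

variable {n : ℕ} (π : Equiv.Perm (Fin n))

/-- `i` is a descent of the word `π 1 ⋯ π n` extended by `π 0 = π (n + 1) = ∞`. The value `0` that
`oneLine` takes outside `{1, …, n}` is overridden by this convention. -/
def IsDescent (i : ℕ) : Prop :=
  i = 0 ∨ i < n ∧ oneLine n π (i + 1) < oneLine n π i

theorem isDescent_zero : IsDescent π 0 := .inl rfl

theorem oneLine_val_succ (i : Fin n) : oneLine n π (i + 1) = π i + 1 :=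
  dif_pos ⟨Nat.le_add_left _ _, i.isLt⟩

theorem oneLine_injOn_Icc : Set.InjOn (oneLine n π) (Set.Icc 1 n) := by
  rintro i ⟨hi, hin⟩ j ⟨hj, hjn⟩ hij
  simp only [oneLine, hi, hin, hj, hjn, and_self, dif_pos, add_left_inj, Fin.val_inj,
    π.injective.eq_iff, Fin.mk.injEq] at hij
  omega

theorem isDescent_succ_iff_lt {m : ℕ} (π : Equiv.Perm (Fin (m + 1))) (i : Fin m) :
    IsDescent π (i + 1) ↔ π i.succ < π i.castSucc := by
  have h₁ := oneLine_val_succ π i.succ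
  have h₂ := oneLine_val_succ π i.castSucc
  simp only [Fin.val_succ, Fin.val_castSucc] at h₁ h₂
  simp [IsDescent, h₁, h₂]

theorem not_isDescent_self [NeZero n] : ¬ IsDescent π n := by
  simp [IsDescent, NeZero.ne n]

theorem not_isDescent_iff {i : ℕ} (hi : i < n) :
    ¬ IsDescent π i ↔ 0 < i ∧ oneLine n π i < oneLine n π (i + 1) := by
  rcases i.eq_zero_or_pos with rfl | hpos
  · simp [IsDescent]
  · have hne : oneLine n π i ≠ oneLine n π (i + 1) := fun h => by
      have := oneLine_injOn_Icc π ⟨hpos, hi.le⟩ ⟨by omega, hi⟩ h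
      omega
    simp only [IsDescent, hpos.ne', hi, hpos, true_and, false_or, not_lt, hne.le_iff_lt]

theorem des_eq_card_isDescent : des n π = #{i ∈ range n | IsDescent π (i + 1)} := by
  rw [des, ← card_map (addRightEmbedding 1) (s := filter _ (range n))]
  congr 1
  ext i
  cases i with
  | zero => simp
  | succ i =>
    simp only [mem_filter, mem_Icc, mem_map, mem_range, addRightEmbedding_apply,
      Nat.add_right_cancel_iff, exists_eq_right]
    rw [IsDescent]
    omega

theorem pk_eq_card_isDescent :
    pk n π = #{i ∈ range n | ¬ IsDescent π i ∧ IsDescent π (i + 1)} := by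
  rw [pk, ← card_map (addRightEmbedding 1) (s := filter _ (range n))]
  congr 1
  ext i
  cases i with
  | zero => simp
  | succ i =>
    simp only [mem_filter, mem_Icc, mem_map, mem_range, addRightEmbedding_apply,
      Nat.add_right_cancel_iff, exists_eq_right, add_tsub_cancel_right]
    by_cases hi : i < n
    · rw [not_isDescent_iff π hi, IsDescent]
      omega
    · omega

/-- The numerator of the generating function over `k` of the words on `2 * k` letters compatible
with `π`; each step of `π`, extended by `∞` on both sides, contributes one factor. -/
def peakDescentPoly {R : Type*} [CommRing R] (y : R) : Polynomial R :=
  .X * ∏ i ∈ range n, stepPoly y (IsDescent π i) (IsDescent π (i + 1))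

theorem peakDescentPoly_zero {R : Type*} [CommRing R] :
    peakDescentPoly π (0 : R) = .X ^ (des n π + 1) := by
  simp [peakDescentPoly, stepPoly, des_eq_card_isDescent, prod_ite, pow_succ']

theorem mk_wordEnumerator_mul_one_sub_X_pow [NeZero n] {R : Type*} [CommRing R] (y : R) :
    PowerSeries.mk (fun k => wordEnumerator (fun c : Fin (2 * k) => letterSign c)
      (fun c => letterWeight y c) π) * (1 - PowerSeries.X) ^ (n + 1) =
      (peakDescentPoly π y : PowerSeries R) := by
  obtain ⟨m, rfl⟩ := Nat.exists_eq_succ_of_ne_zero (NeZero.ne n)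
  simp only [wordEnumerator_letter y π (isDescent_succ_iff_lt π)]
  exact totalSeries_mul_one_sub_X_pow y m (isDescent_zero π) (not_isDescent_self π)

end Descents

section Evaluation

open Finset

variable {R : Type*} [CommRing R] {y t Y T : R}

/- Attaching the factor `1 + y` to a descent and `1 + y * t` to a non-descent makes the values of
`stepPoly` telescope along a permutation. -/
theorem eval_stepPoly_mul (hT : (1 + y * t) * T = y + t)
    (hYT : (1 + y * t) ^ 2 * (Y * T) = (1 + y) ^ 2 * t) (p q : Prop) :
    (stepPoly y p q).eval t * (if q then 1 + y else 1 + y * t) =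
      (if p then 1 + y else 1 + y * t) * (1 + y * t) *
        ((if ¬ p ∧ q then Y else 1) * if q then T else 1) := by
  by_cases hp : p <;> by_cases hq : q <;>
    simp only [stepPoly, hp, hq, if_true, if_false, not_true_eq_false, not_false_eq_true, and_true,
      and_false, Polynomial.eval_add, Polynomial.eval_mul, Polynomial.eval_X, Polynomial.eval_C,
      Polynomial.eval_one]
  · linear_combination -(1 + y) * hT
  · ring
  · linear_combination -hYT
  · ring

theorem prod_eval_stepPoly_mul (hT : (1 + y * t) * T = y + t)
    (hYT : (1 + y * t) ^ 2 * (Y * T) = (1 + y) ^ 2 * t) (D : ℕ → Prop) (n : ℕ) :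
    (∏ i ∈ range n, (stepPoly y (D i) (D (i + 1))).eval t) * (if D n then 1 + y else 1 + y * t) =
      (if D 0 then 1 + y else 1 + y * t) * (1 + y * t) ^ n *
        (Y ^ #{i ∈ range n | ¬ D i ∧ D (i + 1)} * T ^ #{i ∈ range n | D (i + 1)}) := by
  simp only [← prod_const, prod_filter]
  induction n with
  | zero => simp
  | succ n ih =>
    simp only [prod_range_succ, pow_succ]
    rw [mul_assoc, eval_stepPoly_mul hT hYT, mul_assoc, ← mul_assoc, ih]
    ring

theorem pow_pk_mul_pow_des_eq {K : Type*} [Field K] {y t Y T : K} {n : ℕ} [NeZero n]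
    (hT : (1 + y * t) * T = y + t) (hYT : (1 + y * t) ^ 2 * (Y * T) = (1 + y) ^ 2 * t)
    (hyt : 1 + y * t ≠ 0) (π : Equiv.Perm (Fin n)) :
    Y ^ (pk n π + 1) * T ^ (des n π + 1) =
      (1 + y) / (1 + y * t) ^ (n + 1) * (peakDescentPoly π y).eval t := by
  have h := prod_eval_stepPoly_mul hT hYT (IsDescent π) n
  rw [if_neg (not_isDescent_self π), if_pos (isDescent_zero π), ← des_eq_card_isDescent,
    ← pk_eq_card_isDescent] at h
  rw [peakDescentPoly, Polynomial.eval_mul, Polynomial.eval_X, Polynomial.eval_prod,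
    div_mul_eq_mul_div, eq_div_iff (pow_ne_zero _ hyt)]
  refine mul_right_cancel₀ hyt ?_
  linear_combination (1 + y * t) ^ n * Y ^ pk n π * T ^ des n π * hYT - (1 + y) * t * h

end Evaluation

section Conclusion

open Finset

variable {R : Type*} [CommRing R]

theorem sum_letterWeight_pow_mul_letterSign_pow (y : R) (d k : ℕ) :
    ∑ c : Fin (2 * k), letterWeight y (c : ℕ) ^ d * ((letterSign c : ℤ) : R) ^ (d + 1) =
      k * (1 - (-y) ^ d) := by
  rw [sub_eq_neg_add, ← sum_fin_two_mul_ite_even]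
  refine sum_congr rfl fun c _ => ?_
  by_cases hc : Even (c : ℕ)
  · simp only [letterWeight, letterSign, hc, if_true, Units.val_neg, Units.val_one, Int.cast_neg,
      Int.cast_one]
    rw [neg_pow y, pow_succ]
    ring
  · simp [letterWeight, letterSign, hc]

/-- The Eulerian polynomial `∑ π, X ^ (des π + 1)` with coefficients in an arbitrary ring. -/
def eulerianPoly (R : Type*) [CommRing R] (n : ℕ) : Polynomial R :=
  ∑ π : Equiv.Perm (Fin n), .X ^ (des n π + 1)

theorem coe_sum_peakDescentPoly {n : ℕ} [NeZero n] (A : Finset (Equiv.Perm (Fin n))) (y : R) :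
    ((∑ π ∈ A, peakDescentPoly π y : Polynomial R) : PowerSeries R) =
      PowerSeries.mk (fun k => ∑ π ∈ A, wordEnumerator (fun c : Fin (2 * k) => letterSign c)
        (fun c => letterWeight y c) π) * (1 - PowerSeries.X) ^ (n + 1) := by
  rw [← Polynomial.coeToPowerSeries.ringHom_apply, map_sum]
  simp only [Polynomial.coeToPowerSeries.ringHom_apply, ← mk_wordEnumerator_mul_one_sub_X_pow,
    ← sum_mul]
  congr 1
  ext k
  simp

theorem mk_pow_mul_one_sub_X_pow_eq_eulerianPoly (R : Type*) [CommRing R] (n : ℕ) [NeZero n] :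
    PowerSeries.mk (fun k => (k : R) ^ n) * (1 - PowerSeries.X) ^ (n + 1) =
      (eulerianPoly R n : PowerSeries R) := by
  have h := coe_sum_peakDescentPoly univ (0 : R) (n := n)
  have hsum (k : ℕ) : ∑ c : Fin (2 * k), letterWeight (0 : R) c = k := by
    simp only [letterWeight, sum_fin_two_mul_ite_even, zero_add, mul_one]
  simpa only [eulerianPoly, peakDescentPoly_zero, sum_perm_wordEnumerator, hsum] using h.symm

theorem natCast_mul_sum_cyclicSet_peakDescentPoly (n : ℕ) [NeZero n] (y : R) :
    (n : Polynomial R) * ∑ π ∈ cyclicSet n, peakDescentPoly π y =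
      ∑ d ∈ n.divisors, .C (((ArithmeticFunction.moebius d : ℤ) : R) * (1 - (-y) ^ d) ^ (n / d)) *
        (1 - .X) ^ (n - n / d) * eulerianPoly R (n / d) := by
  apply Polynomial.coe_injective R
  have hmk : (n : PowerSeries R) * PowerSeries.mk (fun k => ∑ π ∈ cyclicSet n, wordEnumerator
      (fun c : Fin (2 * k) => letterSign c) (fun c => letterWeight y c) π) =
      ∑ d ∈ n.divisors,
        PowerSeries.C (((ArithmeticFunction.moebius d : ℤ) : R) * (1 - (-y) ^ d) ^ (n / d)) *
          PowerSeries.mk fun k => (k : R) ^ (n / d) := by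
    ext k
    rw [← map_natCast (PowerSeries.C (R := R)), PowerSeries.coeff_C_mul, PowerSeries.coeff_mk,
      sum_cyclicSet_wordEnumerator, map_sum]
    simp only [sum_letterWeight_pow_mul_letterSign_pow, PowerSeries.coeff_C_mul,
      PowerSeries.coeff_mk, mul_pow]
    exact sum_congr rfl fun d _ => by ring
  rw [Polynomial.coe_mul, coe_sum_peakDescentPoly, ← map_natCast (Polynomial.C (R := R)),
    Polynomial.coe_C, map_natCast, ← mul_assoc, hmk, sum_mul,
    ← Polynomial.coeToPowerSeries.ringHom_apply, map_sum]
  refine sum_congr rfl fun d hd => ?_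
  have hdn := Nat.dvd_of_mem_divisors hd
  have : NeZero (n / d) := ⟨(Nat.div_pos (Nat.le_of_dvd (NeZero.pos n) hdn)
    (Nat.pos_of_mem_divisors hd)).ne'⟩
  have hexp : n + 1 = n - n / d + (n / d + 1) := by
    have := Nat.div_le_self n d
    omega
  rw [Polynomial.coeToPowerSeries.ringHom_apply, Polynomial.coe_mul, Polynomial.coe_mul,
    Polynomial.coe_C, Polynomial.coe_pow, Polynomial.coe_sub, Polynomial.coe_one, Polynomial.coe_X,
    ← mk_pow_mul_one_sub_X_pow_eq_eulerianPoly, hexp, pow_add]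
  ring

theorem stmt2_general {K : Type*} [Field K] (n : ℕ) (hn : (n : K) ≠ 0) (y t : K)
    (hyt : y + t ≠ 0) (hyt' : 1 + y * t ≠ 0) :
    ∑ π ∈ cyclicSet n, ((1 + y) ^ 2 * t / ((y + t) * (1 + y * t))) ^ (pk n π + 1) *
        ((y + t) / (1 + y * t)) ^ (des n π + 1) =
      (1 + y) / (n * (1 + y * t) ^ (n + 1)) *
        ∑ d ∈ n.divisors, ((ArithmeticFunction.moebius d : ℤ) : K) * (1 - (-y) ^ d) ^ (n / d) *
          (1 - t) ^ (n - n / d) * (eulerianPoly K (n / d)).eval t := by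
  have : NeZero n := ⟨by rintro rfl; simp at hn⟩
  have hT : (1 + y * t) * ((y + t) / (1 + y * t)) = y + t := mul_div_cancel₀ _ hyt'
  have hYT : (1 + y * t) ^ 2 * ((1 + y) ^ 2 * t / ((y + t) * (1 + y * t)) *
      ((y + t) / (1 + y * t))) = (1 + y) ^ 2 * t := by field_simp
  have h := congrArg (Polynomial.eval t) (natCast_mul_sum_cyclicSet_peakDescentPoly n y)
  simp only [Polynomial.eval_mul, Polynomial.eval_natCast, Polynomial.eval_finsetSum,
    Polynomial.eval_C, Polynomial.eval_pow, Polynomial.eval_sub, Polynomial.eval_one,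
    Polynomial.eval_X] at h
  rw [← h, sum_congr rfl fun π _ => pow_pk_mul_pow_des_eq hT hYT hyt' π, ← mul_sum]
  field_simp

theorem eval₂_eulerianA {K : Type*} [CommRing K] (f : ℚ →+* K) (t : K) (n : ℕ) :
    (eulerianA n).eval₂ f t = (eulerianPoly K n).eval t := by
  simp [eulerianA, eulerianPoly, Polynomial.eval₂_finsetSum, Polynomial.eval_finsetSum]

theorem algebraMap_fractionRing_ne_zero {σ F : Type*} [Field F] {p : MvPolynomial σ F} (v : σ → F)
    (h : MvPolynomial.eval v p ≠ 0) :
    algebraMap (MvPolynomial σ F) (FractionRing (MvPolynomial σ F)) p ≠ 0 := by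
  rw [Ne, FaithfulSMul.algebraMap_eq_zero_iff]
  rintro rfl
  exact h (map_zero _)

end Conclusion

theorem stmt2 (n : ℕ) (hn : 1 ≤ n) :
    letI K := FractionRing (MvPolynomial (Fin 2) ℚ)
    letI y : K := algebraMap (MvPolynomial (Fin 2) ℚ) K (MvPolynomial.X 0)
    letI t : K := algebraMap (MvPolynomial (Fin 2) ℚ) K (MvPolynomial.X 1)
    (∑ π ∈ cyclicSet n,
        ((1 + y) ^ 2 * t / ((y + t) * (1 + y * t))) ^ (pk n π + 1)
          * ((y + t) / (1 + y * t)) ^ (des n π + 1))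
      = ((1 + y) / ((n : K) * (1 + y * t) ^ (n + 1)))
        * ∑ d ∈ n.divisors,
            ((ArithmeticFunction.moebius d : ℤ) : K)
              * (1 - (-y) ^ d) ^ (n / d) * (1 - t) ^ (n - n / d)
              * Polynomial.eval₂
                  ((algebraMap (MvPolynomial (Fin 2) ℚ) K).comp MvPolynomial.C) t
                  (eulerianA (n / d)) := by
  have hyt := algebraMap_fractionRing_ne_zero (F := ℚ) (p := .X 0 + .X 1) (fun _ : Fin 2 => 1)
    (by simp)
  have hyt' := algebraMap_fractionRing_ne_zero (F := ℚ) (p := 1 + .X 0 * .X 1)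
    (fun _ : Fin 2 => 1) (by simp)
  have hn' := algebraMap_fractionRing_ne_zero (F := ℚ) (p := n) (fun _ : Fin 2 => 1)
    (by simpa using Nat.ne_of_gt hn)
  rw [map_natCast] at hn'
  simp only [map_add, map_mul, map_one] at hyt hyt'
  simpa only [eval₂_eulerianA] using stmt2_general n hn' _ _ hyt hyt'

end
end

section
/- Let n ≥ 1. Then the following identity of polynomials in ℚ[t] holds: n · Σ_{π ∈ 𝔠_n} 4^{pk(π)+1} t^{pk(π)+1} (1+t)^{n−1−2·pk(π)} = Σ_{d ∣ n, d odd} μ(d) 2^{n/d+1} (1−t)^{n−n/d} A_{n/d}(t). (This is the formula n(1+t)^{n+1} C_n^{pk}(4t/(1+t)²) = Σ_{d ∣ n, d odd} μ(d) 2^{n/d+1} (1−t)^{n−n/d} A_{n/d}(t), where C_n^{pk}(t) = Σ_{π ∈ 𝔠_n} t^{pk(π)+1}, with denominators cleared; note 2·pk(π) ≤ n−1 for every π ∈ S_n.) -/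
open scoped Classical

noncomputable section

/-!
For a fixed permutation `π`, consider the words `f 0, …, f (n - 1)` over an alphabet of `2 * k`
letters with alternating signs that increase weakly along `π`, a letter of sign `1` being repeated
only at ascents and a letter of sign `-1` only at descents. Adding the letters one by one shows that
their generating function over `k` is
`4 ^ (pk π + 1) * t ^ (pk π + 1) * (1 + t) ^ (n - 1 - 2 * pk π) / (2 * (1 - t) ^ (n + 1))`.
With all signs equal to `1` it is `t ^ (des π + 1) / (1 - t) ^ (n + 1)`, and summing over all `π`
gives Carlitz's identity `∑ k ^ m * t ^ k = A_m(t) / (1 - t) ^ (m + 1)`.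

For a cyclic `π` with a marked point, the orbit of that point labels the positions of a circle of
length `n`, and the words above become circular words compatible with the labelling, as in the
standardization of Gessel and Reutenauer. A primitive circular word is compatible with exactly one
labelling, the square of a primitive word of sign `-1` with exactly two, which the half turn swaps,
and any other word with none. Write `n = 2 ^ a * q` with `q` odd. Since exactly half of the words of
a given length have sign `-1`, summing these counts over the lengths `2 ^ a * d` with `d ∣ q` gives
the number `(2 * k) ^ n` of all words of period `n`. Möbius inversion over the divisors of `q` gives
the number of compatible pairs, and Carlitz's identity sums it over `k`.
-/

section SignedChains

variable {A : Type*} [LinearOrder A]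

/-- A sequence `w` on `X` is compatible with `ψ : X → L` when reading `X` in the order of `ψ` makes
`w` weakly increasing and, on each level set of `w`, the map `T` preserves that order if the letter
has sign `1` and reverses it if the letter has sign `-1`. For `T` a permutation `π` and `ψ = id`
these are the enriched `P`-partitions of `π`; for `T` the successor on `ℕ` they encode words. -/
def SignCompatible {X L : Type*} [LT L] (s : A → ℤˣ) (T : X → X) (ψ : X → L) (w : X → A) : Prop :=
  ∀ x y, ψ x < ψ y → w x ≤ w y ∧ (w x = w y → (ψ (T x) < ψ (T y) ↔ s (w x) = 1))

/-- Sequences of signed letters that satisfy, between consecutive positions, the conditions of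
compatibility with a permutation having an ascent at `i` exactly when `u i` holds. -/
def IsSignedChain (s : A → ℤˣ) (u : ℕ → Prop) {j : ℕ} (f : Fin (j + 1) → A) : Prop :=
  ∀ i : Fin j, f i.castSucc < f i.succ ∨ f i.castSucc = f i.succ ∧ (u i ↔ s (f i.succ) = 1)

theorem signCompatible_id_iff_isSignedChain (s : A → ℤˣ) {n : ℕ} (π : Equiv.Perm (Fin (n + 1)))
    {u : ℕ → Prop} (hu : ∀ i : Fin n, u i ↔ π i.castSucc < π i.succ) (f : Fin (n + 1) → A) :
    SignCompatible s π id f ↔ IsSignedChain s u f := by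
  let r : A × Fin (n + 1) → A × Fin (n + 1) → Prop := fun p q ↦
    p.1 < q.1 ∨ p.1 = q.1 ∧ (p.2 < q.2 ↔ s q.1 = 1)
  have : IsTrans _ r := ⟨by
    rintro ⟨a, p⟩ ⟨b, q⟩ ⟨c, t⟩ (hab | ⟨rfl, hpq⟩) (hbc | ⟨rfl, hqt⟩)
    · exact .inl (hab.trans hbc)
    · exact .inl hab
    · exact .inl hbc
    · refine .inr ⟨rfl, ?_⟩
      by_cases h : s a = 1
      · simp only [h, iff_true] at hpq hqt ⊢
        exact hpq.trans hqt
      · simp only [h, iff_false, not_lt] at hpq hqt ⊢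
        exact hqt.trans hpq⟩
  have key := Fin.liftFun_iff_succ r (f := fun i ↦ (f i, π i))
  constructor
  · intro h i
    rw [hu]
    obtain ⟨hle, heq⟩ := h i.castSucc i.succ i.castSucc_lt_succ
    exact hle.lt_or_eq.imp_right fun e ↦ ⟨e, e ▸ heq e⟩
  · intro h x y hxy
    rcases key.2 (fun i ↦ by simpa only [r, ← hu] using h i) hxy with hlt | ⟨heq, hs⟩
    · exact ⟨hlt.le, fun e ↦ absurd e hlt.ne⟩
    · exact ⟨heq.le, fun e ↦ e ▸ hs⟩

theorem isSignedChain_snoc {s : A → ℤˣ} {u : ℕ → Prop} {j : ℕ} {f : Fin (j + 1) → A} {a : A} :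
    IsSignedChain s u (Fin.snoc (α := fun _ ↦ A) f a : Fin (j + 2) → A) ↔
      IsSignedChain s u f ∧ (f (Fin.last j) < a ∨ f (Fin.last j) = a ∧ (u j ↔ s a = 1)) := by
  simp only [IsSignedChain]
  rw [Fin.forall_fin_succ']
  simp only [Fin.snoc_castSucc, Fin.succ_last, Fin.snoc_last, Fin.val_castSucc, Fin.val_last,
    Fin.succ_castSucc]

/-- The number of signed chains of length `j + 1` with last letter below `N`, over the alphabet
`0 < 1 < 2 < ⋯` with signs `s`, computed by adding the letters one by one. -/
def chainCount (s : ℕ → ℤˣ) (u : ℕ → Prop) : ℕ → ℕ → ℕ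
  | 0, N => N
  | _ + 1, 0 => 0
  | j + 1, N + 1 => chainCount s u (j + 1) N + chainCount s u j (if u j ↔ s N = 1 then N + 1 else N)

open Finset in
theorem card_isSignedChain_last_eq (s : ℕ → ℤˣ) (u : ℕ → Prop) (j : ℕ) {M : ℕ} (a : Fin M) :
    #{f : Fin (j + 2) → Fin M | IsSignedChain (s ∘ Fin.val) u f ∧ f (Fin.last (j + 1)) = a} =
      #{f : Fin (j + 1) → Fin M | IsSignedChain (s ∘ Fin.val) u f ∧
        (f (Fin.last j) : ℕ) < if u j ↔ s a = 1 then (a : ℕ) + 1 else a} := by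
  have hlast (b : Fin M) : (b < a ∨ b = a ∧ (u j ↔ s a = 1)) ↔
      (b : ℕ) < if u j ↔ s a = 1 then (a : ℕ) + 1 else a := by
    split_ifs with h
    · simp only [h, and_true, ← le_iff_lt_or_eq, Order.lt_add_one_iff, Fin.val_fin_le]
    · simp only [h, and_false, or_false, Fin.val_fin_lt]
  symm
  refine card_bij' (fun f _ ↦ Fin.snoc (α := fun _ ↦ Fin M) f a) (fun f _ ↦ Fin.init f) ?_ ?_ ?_ ?_
  · intro f hf
    simp only [mem_filter_univ, ← hlast] at hf ⊢
    exact ⟨isSignedChain_snoc.2 hf, Fin.snoc_last ..⟩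
  · intro f hf
    simp only [mem_filter_univ, ← hlast] at hf ⊢
    refine (isSignedChain_snoc (s := s ∘ Fin.val)).1 ?_
    rw [← hf.2, Fin.snoc_init_self]
    exact hf.1
  · exact fun f _ ↦ Fin.init_snoc ..
  · intro f hf
    rw [← (mem_filter_univ _).1 hf |>.2, Fin.snoc_init_self]

open Finset in
theorem card_isSignedChain_last_lt (s : ℕ → ℤˣ) (u : ℕ → Prop) {M : ℕ} (j : ℕ) {N : ℕ}
    (hN : N ≤ M) :
    #{f : Fin (j + 1) → Fin M | IsSignedChain (s ∘ Fin.val) u f ∧ (f (Fin.last j) : ℕ) < N} =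
      chainCount s u j N := by
  induction j generalizing N with
  | zero =>
    have hchain (f : Fin 1 → Fin M) : IsSignedChain (s ∘ Fin.val) u f := fun i ↦ i.elim0
    calc
      _ = #{b : Fin M | (b : ℕ) < N} :=
        card_equiv (Equiv.funUnique (Fin 1) (Fin M)) fun f ↦ by simp [hchain]
      _ = chainCount s u 0 N := by rw [Fin.card_filter_val_lt, min_eq_right hN, chainCount]
  | succ j ih =>
    induction N with
    | zero => simp [chainCount]
    | succ N ihN =>
      let a : Fin M := ⟨N, hN⟩
      have hsplit (b : Fin M) : (b : ℕ) < N + 1 ↔ (b : ℕ) < N ∨ b = a := by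
        simp only [a, Fin.ext_iff]
        omega
      simp only [hsplit, and_or_left]
      rw [filter_or, card_union_of_disjoint, ihN (by omega), card_isSignedChain_last_eq,
        ih (by simp only [a]; split_ifs <;> omega), chainCount]
      refine disjoint_filter.2 fun f _ h h' ↦ ?_
      simp [h'.2, a] at h

theorem card_signCompatible (s : ℕ → ℤˣ) {u : ℕ → Prop} {n : ℕ} (π : Equiv.Perm (Fin (n + 1)))
    (hu : ∀ i : Fin n, u i ↔ π i.castSucc < π i.succ) (M : ℕ) :
    Finset.card {f : Fin (n + 1) → Fin M | SignCompatible (s ∘ Fin.val) π id f} =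
      chainCount s u n M := by
  simp only [signCompatible_id_iff_isSignedChain _ π hu, ← card_isSignedChain_last_lt s u n le_rfl,
    Fin.is_lt, and_true]

end SignedChains

section ChainSeries

open PowerSeries

variable {u : ℕ → Prop} {j : ℕ}

/-- The generating function, in the variable recording `k`, of the number of signed chains of length
`j + 1` over the alphabet `Fin (N k)`. -/
def chainSeries (s : ℕ → ℤˣ) (u : ℕ → Prop) (j : ℕ) (N : ℕ → ℕ) : PowerSeries ℚ :=
  mk fun k ↦ (chainCount s u j (N k) : ℚ)

theorem chainCount_zero_right (s : ℕ → ℤˣ) (u : ℕ → Prop) (j : ℕ) : chainCount s u j 0 = 0 := by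
  cases j <;> rw [chainCount]

theorem one_sub_X_sq_mul_mk_natCast : (1 - X) ^ 2 * mk (fun k ↦ (k : ℚ)) = X := by
  have h : (1 - X) * mk (fun k ↦ (k : ℚ)) = X * mk 1 := by
    ext (_ | k) <;> simp [sub_mul, coeff_succ_X_mul]
  rw [pow_two, mul_assoc, h, mul_left_comm, mul_comm _ (mk 1), mk_one_mul_one_sub_eq_one, mul_one]

theorem one_sub_X_pow_mul_chainSeries_one (u : ℕ → Prop) (j : ℕ) :
    (1 - X) ^ (j + 2) * chainSeries 1 u j id = X ^ (Nat.count (fun i ↦ ¬u i) j + 1) := by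
  induction j with
  | zero => simpa [chainSeries, chainCount] using one_sub_X_sq_mul_mk_natCast
  | succ j ih =>
    have hstep : (1 - X) * chainSeries 1 u (j + 1) id =
        (if u j then 1 else X) * chainSeries 1 u j id := by
      ext (_ | k)
      · split_ifs <;> simp [sub_mul, chainSeries, chainCount_zero_right]
      · split_ifs with hu <;>
          simp [sub_mul, coeff_succ_X_mul, chainSeries, chainCount, hu]
    rw [pow_succ, mul_assoc, hstep, mul_left_comm, ih, Nat.count_succ]
    by_cases hu : u j <;> simp [hu, ← pow_succ']

/-- The sign of the letter `m` in the alphabet `-1 < 1 < -2 < 2 < ⋯` of enriched `P`-partitions,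
whose letters are numbered from `0`. -/
def altSign (m : ℕ) : ℤˣ := (-1) ^ (m + 1)

theorem altSign_two_mul (k : ℕ) : altSign (2 * k) = -1 := by
  simp [altSign, pow_succ]

theorem altSign_two_mul_add_one (k : ℕ) : altSign (2 * k + 1) = 1 := by
  simp [altSign, pow_add, pow_mul]

/-- `i` follows immediately after an ascent of `u`. -/
def FollowsAscent (u : ℕ → Prop) : ℕ → Prop
  | 0 => False
  | i + 1 => u i

theorem chainSeries_altSign_even (u : ℕ → Prop) (j : ℕ) :
    chainSeries altSign u (j + 1) (2 * ·) = X * chainSeries altSign u (j + 1) (2 * · + 1) +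
      if u j then chainSeries altSign u j (2 * ·) else X * chainSeries altSign u j (2 * · + 1) := by
  ext (_ | k)
  · split_ifs <;> simp [chainSeries, chainCount_zero_right]
  · split_ifs with hu <;>
      simp [chainSeries, coeff_succ_X_mul, mul_add, chainCount, hu, altSign_two_mul_add_one]

theorem chainSeries_altSign_odd (u : ℕ → Prop) (j : ℕ) :
    chainSeries altSign u (j + 1) (2 * · + 1) = chainSeries altSign u (j + 1) (2 * ·) +
      chainSeries altSign u j (if u j then (2 * ·) else (2 * · + 1)) := by
  ext k
  split_ifs with hu <;> simp [chainSeries, chainCount, hu, altSign_two_mul]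

theorem one_add_X_mul_chainSeries_of_followsAscent (h : FollowsAscent u j) :
    (1 + X) * chainSeries altSign u j (2 * · + 1) = 2 * chainSeries altSign u j (2 * ·) := by
  obtain _ | j := j
  · exact h.elim
  replace h : u j := h
  have heven := chainSeries_altSign_even u j
  have hodd := chainSeries_altSign_odd u j
  rw [if_pos h] at heven hodd
  linear_combination hodd - heven

theorem two_mul_X_mul_chainSeries_of_not_followsAscent (h : ¬FollowsAscent u j) :
    2 * X * chainSeries altSign u j (2 * · + 1) = (1 + X) * chainSeries altSign u j (2 * ·) := by
  obtain _ | j := j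
  · rw [two_mul, add_mul, add_mul, one_mul]
    ext (_ | k)
    · simp [chainSeries, chainCount]
    · simp only [chainSeries, chainCount, map_add, coeff_succ_X_mul, coeff_mk]
      push_cast
      ring
  replace h : ¬u j := h
  have heven := chainSeries_altSign_even u j
  have hodd := chainSeries_altSign_odd u j
  rw [if_neg h] at heven hodd
  linear_combination X * hodd - heven

theorem one_sub_X_mul_chainSeries_of_ascent (hu : u j) :
    (1 - X) * chainSeries altSign u (j + 1) (2 * ·) =
      (1 + X) * chainSeries altSign u j (2 * ·) := by
  have heven := chainSeries_altSign_even u j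
  have hodd := chainSeries_altSign_odd u j
  rw [if_pos hu] at heven hodd
  linear_combination heven + X * hodd

theorem one_sub_X_mul_chainSeries_of_descent (hu : ¬u j) :
    (1 - X) * chainSeries altSign u (j + 1) (2 * ·) =
      2 * X * chainSeries altSign u j (2 * · + 1) := by
  have heven := chainSeries_altSign_even u j
  have hodd := chainSeries_altSign_odd u j
  rw [if_neg hu] at heven hodd
  linear_combination heven + X * hodd

/-- The number of peaks before `j` of a sequence whose ascents are given by `u`. -/
def peakCount (u : ℕ → Prop) (j : ℕ) : ℕ := Nat.count (fun i ↦ FollowsAscent u i ∧ ¬u i) j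

theorem two_mul_peakCount_le (u : ℕ → Prop) (j : ℕ) :
    2 * peakCount u j + (if FollowsAscent u j then 1 else 0) ≤ j := by
  induction j with
  | zero => rw [peakCount, Nat.count_zero, if_neg (c := FollowsAscent u 0) id]
  | succ j ih =>
    rw [peakCount, Nat.count_succ]
    change 2 * (peakCount u j + _) + (if u j then 1 else 0) ≤ _
    split_ifs at ih ⊢ <;> grind

theorem one_sub_X_pow_mul_chainSeries_altSign (u : ℕ → Prop) (j : ℕ) :
    (1 + X) ^ (2 * peakCount u j) * ((1 - X) ^ (j + 2) * chainSeries altSign u j (2 * ·)) =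
      2 * X * (4 * X) ^ peakCount u j * (1 + X) ^ j := by
  induction j with
  | zero =>
    have h : chainSeries altSign u 0 (2 * ·) = 2 * mk (fun k ↦ (k : ℚ)) := by
      ext k
      simp [chainSeries, chainCount, ← map_ofNat (C (R := ℚ))]
    simp only [peakCount, Nat.count_zero, h]
    linear_combination 2 * one_sub_X_sq_mul_mk_natCast
  | succ j ih =>
    rw [peakCount, Nat.count_succ, ← peakCount]
    by_cases hu : u j
    · simp only [hu, not_true_eq_false, and_false, if_false, add_zero]
      linear_combination (1 + X) ^ (2 * peakCount u j) * (1 - X) ^ (j + 2) *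
        one_sub_X_mul_chainSeries_of_ascent hu + (1 + X) * ih
    by_cases h : FollowsAscent u j
    · simp only [h, hu, not_false_eq_true, and_self, if_true]
      linear_combination (1 + X) ^ (2 * peakCount u j + 2) * (1 - X) ^ (j + 2) *
        one_sub_X_mul_chainSeries_of_descent hu +
        2 * X * (1 + X) ^ (2 * peakCount u j + 1) * (1 - X) ^ (j + 2) *
        one_add_X_mul_chainSeries_of_followsAscent h + 4 * X * (1 + X) * ih
    · simp only [h, false_and, if_false, add_zero]
      linear_combination (1 + X) ^ (2 * peakCount u j) * (1 - X) ^ (j + 2) *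
        (one_sub_X_mul_chainSeries_of_descent hu +
          two_mul_X_mul_chainSeries_of_not_followsAscent h) + (1 + X) * ih

end ChainSeries

section PermutationStatistics

open Finset

/-- Whether the one-line notation of `π` ascends from its `i`-th to its `(i + 1)`-st letter, letters
being numbered from `0`. -/
def IsAscent (n : ℕ) (π : Equiv.Perm (Fin n)) (i : ℕ) : Prop :=
  oneLine n π (i + 1) < oneLine n π (i + 2)

theorem isAscent_iff {n : ℕ} (π : Equiv.Perm (Fin (n + 1))) (i : Fin n) :
    IsAscent (n + 1) π i ↔ π i.castSucc < π i.succ := by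
  rw [IsAscent, oneLine, oneLine, dif_pos (by omega), dif_pos (by omega), add_lt_add_iff_right]
  rfl

theorem oneLine_lt_iff_not_isAscent {n i : ℕ} (π : Equiv.Perm (Fin (n + 1))) (hi : i < n) :
    oneLine (n + 1) π (i + 2) < oneLine (n + 1) π (i + 1) ↔ ¬IsAscent (n + 1) π i := by
  have hne : π (Fin.succ ⟨i, hi⟩) ≠ π (Fin.castSucc ⟨i, hi⟩) :=
    π.injective.ne (Fin.castSucc_lt_succ).ne'
  rw [isAscent_iff π ⟨i, hi⟩, not_lt, hne.le_iff_lt, oneLine, oneLine, dif_pos (by omega),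
    dif_pos (by omega), add_lt_add_iff_right]
  rfl

theorem card_filter_Icc_one (P : ℕ → Prop) [DecidablePred P] (n : ℕ) :
    #{i ∈ Icc 1 n | P i} = Nat.count (fun i ↦ P (i + 1)) n := by
  rw [Nat.count_eq_card_filter_range, range_eq_Ico, card_filter, card_filter,
    sum_Ico_add' (fun i ↦ if P i then 1 else 0) 0 n 1, zero_add, Ico_add_one_right_eq_Icc]

theorem des_eq_count {n : ℕ} (π : Equiv.Perm (Fin (n + 1))) :
    des (n + 1) π = Nat.count (fun i ↦ ¬IsAscent (n + 1) π i) n := by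
  rw [des, Nat.add_sub_cancel, card_filter_Icc_one, Nat.count_eq_card_filter_range,
    Nat.count_eq_card_filter_range]
  refine congrArg card (filter_congr fun i hi ↦ ?_)
  exact oneLine_lt_iff_not_isAscent π (mem_range.1 hi)

theorem pk_eq_peakCount {n : ℕ} (π : Equiv.Perm (Fin (n + 1))) :
    pk (n + 1) π = peakCount (IsAscent (n + 1) π) n := by
  have hIcc : Icc 2 n = {i ∈ Icc 1 n | 2 ≤ i} := by ext; grind
  rw [pk, Nat.add_sub_cancel, hIcc, filter_filter, card_filter_Icc_one, peakCount,
    Nat.count_eq_card_filter_range, Nat.count_eq_card_filter_range]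
  refine congrArg card (filter_congr fun i hi ↦ ?_)
  rw [← oneLine_lt_iff_not_isAscent π (mem_range.1 hi)]
  obtain _ | i := i
  · simp [FollowsAscent]
  · simp [FollowsAscent, IsAscent]

open PowerSeries in
theorem pk_term_eq_mul_mk_card_signCompatible {n : ℕ} (hn : 1 ≤ n) (π : Equiv.Perm (Fin n)) :
    (4 : PowerSeries ℚ) ^ (pk n π + 1) * X ^ (pk n π + 1) * (1 + X) ^ (n - 1 - 2 * pk n π) =
      2 * (1 - X) ^ (n + 1) * PowerSeries.mk fun k ↦
        (#{f : Fin n → Fin (2 * k) | SignCompatible (altSign ∘ Fin.val) π id f} : ℚ) := by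
  obtain ⟨n, rfl⟩ := Nat.exists_eq_add_of_le' hn
  set p := pk (n + 1) π with hp
  rw [pk_eq_peakCount] at hp
  have hle := two_mul_peakCount_le (IsAscent (n + 1) π) n
  have hseries := one_sub_X_pow_mul_chainSeries_altSign (IsAscent (n + 1) π) n
  rw [← hp] at hle hseries
  have hne : (1 + X : PowerSeries ℚ) ^ (2 * p) ≠ 0 :=
    pow_ne_zero _ fun h ↦ by simpa using congrArg (coeff 0) h
  have hpow : (1 + X : PowerSeries ℚ) ^ n = (1 + X) ^ (2 * p) * (1 + X) ^ (n - 2 * p) := by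
    rw [← pow_add, Nat.add_sub_cancel' (by omega)]
  simp only [card_signCompatible altSign π (isAscent_iff π), Nat.add_sub_cancel]
  refine mul_left_cancel₀ hne ?_
  change _ = _ * (_ * chainSeries altSign (IsAscent (n + 1) π) n (2 * ·))
  rw [hpow, mul_pow] at hseries
  linear_combination -2 * hseries

theorem signCompatible_comp_iff_eq_sort {n : ℕ} {A : Type*} [LinearOrder A]
    (π : Equiv.Perm (Fin n)) (g : Fin n → A) :
    SignCompatible 1 π id (g ∘ π) ↔ π = Tuple.sort g := by
  simp only [SignCompatible, id, Pi.one_apply, iff_true, Function.comp_apply]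
  rw [Tuple.eq_sort_iff]
  constructor
  · exact fun h ↦ ⟨fun x y hxy ↦ hxy.lt_or_eq.elim (h x y · |>.1) (· ▸ le_rfl),
      fun x y hxy ↦ (h x y hxy).2⟩
  · exact fun h x y hxy ↦ ⟨h.1 hxy.le, h.2 x y hxy⟩

theorem sum_card_signCompatible_one (n : ℕ) (A : Type*) [LinearOrder A] [Fintype A] :
    ∑ π : Equiv.Perm (Fin n), #{f : Fin n → A | SignCompatible 1 π id f} =
      Fintype.card A ^ n := by
  calc
    _ = ∑ π : Equiv.Perm (Fin n), #{g : Fin n → A | Tuple.sort g = π} :=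
      sum_congr rfl fun π _ ↦ (card_equiv (π.symm.arrowCongr (Equiv.refl A)) fun g ↦ by
        rw [mem_filter_univ, mem_filter_univ, eq_comm]
        exact (signCompatible_comp_iff_eq_sort π g).symm).symm
    _ = #(univ : Finset (Fin n → A)) :=
      (card_eq_sum_card_fiberwise fun _ _ ↦ mem_coe.2 (mem_univ _)).symm
    _ = _ := by simp

open PowerSeries in
theorem coe_eulerianA {m : ℕ} (hm : 1 ≤ m) :
    (eulerianA m : PowerSeries ℚ) = (1 - X) ^ (m + 1) * PowerSeries.mk fun k ↦ (k : ℚ) ^ m := by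
  obtain ⟨m, rfl⟩ := Nat.exists_eq_add_of_le' hm
  have hmk : PowerSeries.mk (fun k ↦ (k : ℚ) ^ (m + 1)) =
      ∑ π : Equiv.Perm (Fin (m + 1)), chainSeries 1 (IsAscent (m + 1) π) m id := by
    ext k
    rw [map_sum, coeff_mk]
    have := sum_card_signCompatible_one (m + 1) (Fin k)
    simp only [Fintype.card_fin] at this
    simp only [chainSeries, id, coeff_mk, ← card_signCompatible 1 _ (isAscent_iff _) k]
    exact_mod_cast this.symm
  rw [hmk, mul_sum, eulerianA, ← Polynomial.coeToPowerSeries.ringHom_apply, map_sum]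
  simp only [one_sub_X_pow_mul_chainSeries_one, des_eq_count, map_pow,
    Polynomial.coeToPowerSeries.ringHom_apply, Polynomial.coe_X]

end PermutationStatistics

section PeriodicWords

open Finset Function

variable {A L : Type*}

theorem periodic_eq_of_modEq {w : ℕ → A} {n x y : ℕ} (hw : Periodic w n) (h : x ≡ y [MOD n]) :
    w x = w y := by
  rw [← hw.map_mod_nat x, h, hw.map_mod_nat y]

/-- A labelling by `L` of the positions of a circle of length `n`, unrolled along `ℕ`: labels are
repeated exactly when the positions agree modulo `n`. -/
def IsCyclicLabelling (n : ℕ) (ψ : ℕ → L) : Prop := ∀ x y, ψ x = ψ y ↔ x ≡ y [MOD n]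

namespace IsCyclicLabelling

variable {n : ℕ}

theorem periodic {ψ : ℕ → L} (hψ : IsCyclicLabelling n ψ) : Periodic ψ n := fun _ ↦
  (hψ _ _).2 (Nat.add_modEq_right ..)

theorem surjective {ψ : ℕ → Fin n} (hψ : IsCyclicLabelling n ψ) : Surjective ψ := by
  have hinj : Injective fun i : Fin n ↦ ψ i := fun i k hik ↦
    Fin.ext (Nat.ModEq.eq_of_lt_of_lt ((hψ _ _).1 hik) i.2 k.2)
  intro l
  obtain ⟨i, hi⟩ := Finite.surjective_of_injective hinj l
  exact ⟨i, hi⟩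

/-- Spelling out a function of the labels along the circle gives all the words of period `n`. -/
def wordEquiv {ψ : ℕ → L} (hψ : IsCyclicLabelling n ψ) (hsurj : Surjective ψ) (A : Type*) :
    (L → A) ≃ {w : ℕ → A // Periodic w n} where
  toFun f := ⟨f ∘ ψ, hψ.periodic.comp f⟩
  invFun w := w.1 ∘ surjInv hsurj
  left_inv f := funext fun l ↦ congrArg f (surjInv_eq hsurj l)
  right_inv w := Subtype.ext <| funext fun x ↦
    periodic_eq_of_modEq w.2 ((hψ _ _).1 (surjInv_eq hsurj (ψ x)))

end IsCyclicLabelling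

theorem isCyclicLabelling_ofNat (n : ℕ) [NeZero n] : IsCyclicLabelling n (Fin.ofNat n) :=
  fun _ _ ↦ Fin.ext_iff

theorem finite_setOf_periodic (A : Type*) [Finite A] (n : ℕ) :
    {w : ℕ → A | n ≠ 0 ∧ Periodic w n}.Finite := by
  by_cases hn : n = 0
  · simp [hn]
  have : NeZero n := ⟨hn⟩
  simp only [ne_eq, hn, not_false_eq_true, true_and]
  have hψ := isCyclicLabelling_ofNat n
  exact .of_equiv _ (hψ.wordEquiv hψ.surjective A)

/-- The words of period `n`, as a `Finset`. It is empty for `n = 0`. -/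
def periodicWords (A : Type*) [Finite A] (n : ℕ) : Finset (ℕ → A) :=
  (finite_setOf_periodic A n).toFinset

theorem mem_periodicWords [Finite A] {n : ℕ} (hn : n ≠ 0) {w : ℕ → A} :
    w ∈ periodicWords A n ↔ Periodic w n := by
  rw [periodicWords, Set.Finite.mem_toFinset, Set.mem_ofPred_eq, and_iff_right hn]

theorem IsCyclicLabelling.card_filter_comp [Fintype A] [Fintype L] {n : ℕ} (hn : n ≠ 0)
    {ψ : ℕ → L} (hψ : IsCyclicLabelling n ψ) (hsurj : Surjective ψ) (P : (ℕ → A) → Prop)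
    [DecidablePred P] :
    #{f : L → A | P (f ∘ ψ)} = #{w ∈ periodicWords A n | P w} := by
  refine card_bij (fun f _ ↦ hψ.wordEquiv hsurj A f) ?_ ?_ ?_
  · intro f hf
    rw [mem_filter_univ] at hf
    exact mem_filter.2 ⟨(mem_periodicWords hn).2 (hψ.wordEquiv hsurj A f).2, hf⟩
  · exact fun f _ g _ h ↦ (hψ.wordEquiv hsurj A).injective (Subtype.ext h)
  · intro w hw
    rw [mem_filter, mem_periodicWords hn] at hw
    obtain ⟨f, hf⟩ := (hψ.wordEquiv hsurj A).surjective ⟨w, hw.1⟩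
    have hf : f ∘ ψ = w := congrArg Subtype.val hf
    exact ⟨f, by simpa [hf] using hw.2, hf⟩

theorem card_periodicWords [Fintype A] {n : ℕ} (hn : n ≠ 0) :
    #(periodicWords A n) = Fintype.card A ^ n := by
  have : NeZero n := ⟨hn⟩
  have hψ := isCyclicLabelling_ofNat n
  simpa using (hψ.card_filter_comp hn hψ.surjective (A := A) fun _ ↦ True).symm

/-- The least period of a word, or `0` if there is none. -/
def wordPeriod (w : ℕ → A) : ℕ := minimalPeriod (fun (v : ℕ → A) x ↦ v (x + 1)) w

theorem wordPeriod_dvd_iff {w : ℕ → A} {t : ℕ} : wordPeriod w ∣ t ↔ Periodic w t := by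
  have hiter : (fun (v : ℕ → A) x ↦ v (x + 1))^[t] w = fun x ↦ w (x + t) := by
    induction t with
    | zero => rfl
    | succ t ih =>
      rw [iterate_succ_apply', ih]
      exact funext fun x ↦ congrArg w (by ring)
  rw [wordPeriod, ← isPeriodicPt_iff_minimalPeriod_dvd, IsPeriodicPt, IsFixedPt, hiter, Periodic,
    funext_iff]

theorem periodic_wordPeriod (w : ℕ → A) : Periodic w (wordPeriod w) :=
  wordPeriod_dvd_iff.1 dvd_rfl

theorem modEq_wordPeriod_iff {w : ℕ → A} {n : ℕ} (hw : Periodic w n) (hn : n ≠ 0) {x y : ℕ} :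
    x ≡ y [MOD wordPeriod w] ↔ ∀ r, w (x + r) = w (y + r) := by
  constructor
  · exact fun h r ↦ periodic_eq_of_modEq (periodic_wordPeriod w) (h.add_right r)
  · intro h
    wlog hxy : x ≤ y generalizing x y
    · exact (this (fun r ↦ (h r).symm) (le_of_not_ge hxy)).symm
    refine (Nat.modEq_iff_dvd' hxy).2 (wordPeriod_dvd_iff.2 fun z ↦ ?_)
    have hx : x ≤ n * x := Nat.le_mul_of_pos_left x (Nat.pos_of_ne_zero hn)
    have hper : Periodic w (n * x) := by simpa [mul_comm] using hw.nat_mul x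
    calc w (z + (y - x)) = w (z + (y - x) + n * x) := (hper _).symm
      _ = w (y + (z + n * x - x)) := congrArg w (by lia)
      _ = w (x + (z + n * x - x)) := (h _).symm
      _ = w (z + n * x) := congrArg w (by lia)
      _ = w z := hper z

/-- The product of the signs of the first `r` letters of a word. -/
def wordSign (s : A → ℤˣ) (w : ℕ → A) (r : ℕ) : ℤˣ := ∏ i ∈ range r, s (w i)

theorem wordSign_mul_add {s : A → ℤˣ} {w : ℕ → A} {p : ℕ} (hw : Periodic w p) (e x : ℕ) :
    wordSign s w (p * e + x) = wordSign s w p ^ e * wordSign s w x := by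
  have hshift (e i : ℕ) : w (p * e + i) = w i := by
    rw [add_comm, mul_comm]
    exact hw.nat_mul e i
  simp only [wordSign, prod_range_add, hshift]
  congr 1
  induction e with
  | zero => simp
  | succ e ih => simp only [mul_add_one, prod_range_add, hshift, ih, pow_succ]

theorem wordSign_mul {s : A → ℤˣ} {w : ℕ → A} {p : ℕ} (hw : Periodic w p) (e : ℕ) :
    wordSign s w (p * e) = wordSign s w p ^ e := by
  simpa [wordSign] using wordSign_mul_add (s := s) hw e 0

theorem two_mul_card_wordSign_eq_neg_one [Fintype A] {s : A → ℤˣ} (hs : ∑ a, (s a : ℤ) = 0)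
    {m : ℕ} (hm : m ≠ 0) :
    2 * #{w ∈ periodicWords A m | wordSign s w m = -1} = #(periodicWords A m) := by
  have : NeZero m := ⟨hm⟩
  have hψ := isCyclicLabelling_ofNat m
  have hsign (f : Fin m → A) : wordSign s (f ∘ Fin.ofNat m) m = ∏ i, s (f i) := by
    rw [wordSign, ← Fin.prod_univ_eq_prod_range fun i ↦ s ((f ∘ Fin.ofNat m) i)]
    simp
  have hcard : #{w ∈ periodicWords A m | wordSign s w m = -1} =
      #{f : Fin m → A | ∏ i, s (f i) = -1} := by
    rw [← hψ.card_filter_comp hm hψ.surjective fun w ↦ wordSign s w m = -1]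
    congr! with f
    exact hsign f
  have hunit (ε : ℤˣ) : (ε : ℤ) = 1 - 2 * if ε = -1 then 1 else 0 := by
    rcases Int.units_eq_one_or ε with rfl | rfl <;> rfl
  have hsum : ∑ f : Fin m → A, ((∏ i, s (f i) : ℤˣ) : ℤ) = 0 := by
    simp only [Units.coe_prod]
    rw [← Fintype.sum_pow (fun a ↦ (s a : ℤ)), hs, zero_pow hm]
  simp only [hunit, sum_sub_distrib, ← mul_sum, sum_boole, sum_const, card_univ] at hsum
  rw [hcard, card_periodicWords hm]
  zify
  simpa using (sub_eq_zero.1 hsum).symm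

/-- The number of cyclic labellings of length `n` that are compatible with the word `w`, see
`card_compatibleLabellings`. -/
def labellingCount (s : A → ℤˣ) (n : ℕ) (w : ℕ → A) : ℕ :=
  (if wordPeriod w = n then 1 else 0) +
    if 2 * wordPeriod w = n then if wordSign s w (wordPeriod w) = -1 then 2 else 0 else 0

theorem labellingCount_of_not_periodic {s : A → ℤˣ} {n : ℕ} {w : ℕ → A} (hw : ¬Periodic w n) :
    labellingCount s n w = 0 := by
  rw [← wordPeriod_dvd_iff] at hw
  rw [labellingCount, if_neg fun h ↦ hw h.dvd, if_neg fun h ↦ hw ⟨2, by rw [← h, mul_comm]⟩]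

theorem sum_divisors_ite_eq_mul {c q : ℕ} (hc : c ≠ 0) (hq : q ≠ 0) (x b : ℕ) :
    ∑ d ∈ q.divisors, (if x = c * d then b else 0) = if c ∣ x ∧ x ∣ c * q then b else 0 := by
  by_cases hx : c ∣ x
  · obtain ⟨e, rfl⟩ := hx
    simp [hc, hq, Nat.mul_dvd_mul_iff_left (Nat.pos_of_ne_zero hc)]
  · rw [if_neg (hx ·.1)]
    exact sum_eq_zero fun d _ ↦ if_neg fun h ↦ hx ⟨d, h⟩

theorem two_pow_dvd_iff_not_two_mul_dvd {a q p : ℕ} (hq : Odd q) (hp : p ∣ 2 ^ a * q) :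
    2 ^ a ∣ p ↔ ¬2 * p ∣ 2 ^ a * q := by
  constructor
  · rintro ⟨r, rfl⟩ h
    rw [mul_left_comm, Nat.mul_dvd_mul_iff_left (by positivity)] at h
    exact (Nat.not_even_iff_odd.2 hq) (even_iff_two_dvd.2 (dvd_of_mul_right_dvd h))
  · obtain ⟨e, he⟩ := hp
    intro h
    have hodd : Odd e := by
      rw [← Nat.not_even_iff_odd, even_iff_two_dvd]
      rintro ⟨f, rfl⟩
      exact h ⟨f, by rw [he]; ring⟩
    refine (Nat.Coprime.pow_left a (Nat.coprime_two_left.2 hodd)).dvd_of_dvd_mul_right ?_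
    exact ⟨q, he.symm⟩

theorem sum_labellingCount {s : A → ℤˣ} {a q : ℕ} (hq : Odd q) {w : ℕ → A}
    (hw : Periodic w (2 ^ a * q)) :
    ∑ d ∈ q.divisors, labellingCount s (2 ^ a * d) w =
      (if ¬2 * wordPeriod w ∣ 2 ^ a * q then 1 else 0) +
        if 2 * wordPeriod w ∣ 2 ^ a * q then
          if wordSign s w (2 ^ a * q / 2) = -1 then 2 else 0 else 0 := by
  have hp := wordPeriod_dvd_iff.2 hw
  simp only [labellingCount, sum_add_distrib,
    sum_divisors_ite_eq_mul (pow_ne_zero a two_ne_zero) hq.pos.ne',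
    ← two_pow_dvd_iff_not_two_mul_dvd hq hp, hp, and_true]
  congr 1
  by_cases h : 2 * wordPeriod w ∣ 2 ^ a * q
  · obtain ⟨e, he⟩ := h
    have hhalf : 2 ^ a * q / 2 = wordPeriod w * e := by
      rw [he, mul_assoc, Nat.mul_div_cancel_left _ two_pos]
    have hpos : 0 < 2 * wordPeriod w :=
      Nat.pos_of_mul_pos_right (he ▸ Nat.mul_pos (by positivity) hq.pos)
    have hodd : 2 ^ a ∣ 2 * wordPeriod w ↔ Odd e := by
      rw [two_pow_dvd_iff_not_two_mul_dvd hq ⟨e, he⟩, he, mul_comm 2 (2 * _),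
        Nat.mul_dvd_mul_iff_left hpos, ← even_iff_two_dvd, Nat.not_even_iff_odd]
    rw [hhalf, wordSign_mul (periodic_wordPeriod w)]
    simp only [hodd]
    have hdvd : 2 * wordPeriod w ∣ 2 ^ a * q := ⟨e, he⟩
    rcases Int.units_eq_one_or (wordSign s w (wordPeriod w)) with hε | hε
    · simp [hε]
    · rcases Nat.even_or_odd e with h | h
      · simp [hε, h]
      · simp [hε, h, hdvd]
  · simp [h]

/-- The number of pairs of a word and a cyclic labelling of length `n` that are compatible with each
other, expressed through the periods of the words. -/
def labelledWordCount (A : Type*) [Finite A] (s : A → ℤˣ) (n : ℕ) : ℕ :=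
  ∑ w ∈ periodicWords A n, labellingCount s n w

theorem sum_ite_two_mul_wordPeriod_dvd [Fintype A] {s : A → ℤˣ} (hs : ∑ a, (s a : ℤ) = 0) {n : ℕ}
    (hn : n ≠ 0) :
    ∑ w ∈ periodicWords A n, (if 2 * wordPeriod w ∣ n then
      if wordSign s w (n / 2) = -1 then 2 else 0 else 0) =
        #{w ∈ periodicWords A n | 2 * wordPeriod w ∣ n} := by
  rcases Nat.even_or_odd' n with ⟨m, rfl | rfl⟩
  · have hm : m ≠ 0 := by lia
    have hwords : {w ∈ periodicWords A (2 * m) | 2 * wordPeriod w ∣ 2 * m} = periodicWords A m := by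
      ext w
      rw [mem_filter, mem_periodicWords hn, mem_periodicWords hm,
        Nat.mul_dvd_mul_iff_left two_pos, wordPeriod_dvd_iff, and_iff_right_iff_imp]
      exact fun h ↦ h.nat_mul 2
    rw [← sum_filter, hwords, Nat.mul_div_cancel_left m two_pos,
      ← two_mul_card_wordSign_eq_neg_one hs hm, ← sum_filter, sum_const, smul_eq_mul, mul_comm]
  · have hodd (p : ℕ) : ¬2 * p ∣ 2 * m + 1 := fun h ↦ by
      have := dvd_of_mul_right_dvd h
      lia
    simp [hodd]

theorem sum_labelledWordCount [Fintype A] {s : A → ℤˣ} (hs : ∑ a, (s a : ℤ) = 0) (a : ℕ) {q : ℕ}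
    (hq : Odd q) :
    ∑ d ∈ q.divisors, labelledWordCount A s (2 ^ a * d) = Fintype.card A ^ (2 ^ a * q) := by
  have hn : 2 ^ a * q ≠ 0 := mul_ne_zero (by positivity) hq.pos.ne'
  have hextend (d : ℕ) (hd : d ∈ q.divisors) : labelledWordCount A s (2 ^ a * d) =
      ∑ w ∈ periodicWords A (2 ^ a * q), labellingCount s (2 ^ a * d) w := by
    have hd' : 2 ^ a * d ≠ 0 := mul_ne_zero (by positivity) (Nat.pos_of_mem_divisors hd).ne'
    refine sum_subset (fun w hw ↦ ?_) fun w _ hw ↦ labellingCount_of_not_periodic ?_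
    · rw [mem_periodicWords hd', ← wordPeriod_dvd_iff] at hw
      rw [mem_periodicWords hn, ← wordPeriod_dvd_iff]
      exact hw.trans (Nat.mul_dvd_mul_left _ (Nat.dvd_of_mem_divisors hd))
    · rwa [mem_periodicWords hd'] at hw
  rw [sum_congr rfl hextend, sum_comm,
    sum_congr rfl fun w hw ↦ sum_labellingCount hq ((mem_periodicWords hn).1 hw),
    sum_add_distrib, sum_ite_two_mul_wordPeriod_dvd hs hn, sum_boole, Nat.cast_id, add_comm,
    card_filter_add_card_filter_not, card_periodicWords hn]

theorem labelledWordCount_eq [Fintype A] {s : A → ℤˣ} (hs : ∑ a, (s a : ℤ) = 0) {n : ℕ}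
    (hn : n ≠ 0) :
    (labelledWordCount A s n : ℚ) = ∑ d ∈ n.divisors with Odd d,
      (ArithmeticFunction.moebius d : ℚ) * (Fintype.card A : ℚ) ^ (n / d) := by
  obtain ⟨a, q, hq, rfl⟩ := Nat.exists_eq_two_pow_mul_odd hn
  have hdivisors : {d ∈ (2 ^ a * q).divisors | Odd d} = q.divisors := by
    ext d
    simp only [mem_filter, Nat.mem_divisors]
    constructor
    · rintro ⟨⟨hdvd, -⟩, hd⟩
      exact ⟨((Nat.coprime_two_right.2 hd).pow_right a).dvd_of_dvd_mul_left hdvd, hq.pos.ne'⟩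
    · rintro ⟨hdvd, -⟩
      exact ⟨⟨hdvd.mul_left _, hn⟩, hq.of_dvd_nat hdvd⟩
  have hinversion := (ArithmeticFunction.sum_eq_iff_sum_mul_moebius_eq_on
    (f := fun d ↦ (labelledWordCount A s (2 ^ a * d) : ℚ))
    (g := fun d ↦ (Fintype.card A : ℚ) ^ (2 ^ a * d)) {d | Odd d}
    fun _ _ hdvd hodd ↦ Odd.of_dvd_nat hodd hdvd).1
    (fun m _ hm ↦ mod_cast sum_labelledWordCount hs a hm) q hq.pos hq
  rw [← hinversion, hdivisors, Nat.sum_divisorsAntidiagonal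
    (fun i j ↦ (ArithmeticFunction.moebius i : ℚ) * (Fintype.card A : ℚ) ^ (2 ^ a * j))]
  exact sum_congr rfl fun d hd ↦ by rw [Nat.mul_div_assoc _ (Nat.dvd_of_mem_divisors hd)]

end PeriodicWords

section Labellings

open Finset Function

variable {A L : Type*} [LinearOrder A] [LinearOrder L] {s : A → ℤˣ} {w : ℕ → A} {n : ℕ}

theorem SignCompatible.lt_iff_of_ne {ψ : ℕ → L} (hc : SignCompatible s Nat.succ ψ w) {x y : ℕ}
    (h : w x ≠ w y) (hψ : ψ x ≠ ψ y) : ψ x < ψ y ↔ w x < w y :=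
  ⟨fun hlt ↦ (hc x y hlt).1.lt_of_ne h,
    fun hlt ↦ (hψ.lt_or_gt).resolve_right fun hgt ↦ hlt.not_ge (hc y x hgt).1⟩

theorem SignCompatible.succ_lt_succ_iff {ψ : ℕ → L} (hψ : IsCyclicLabelling n ψ)
    (hc : SignCompatible s Nat.succ ψ w) {x y : ℕ} (hxy : ¬x ≡ y [MOD n]) (h : w x = w y) :
    ψ (x + 1) < ψ (y + 1) ↔ (ψ x < ψ y ↔ s (w x) = 1) := by
  have hne : ψ x ≠ ψ y := fun e ↦ hxy ((hψ x y).1 e)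
  have hne' : ψ (x + 1) ≠ ψ (y + 1) := fun e ↦ hxy (((hψ _ _).1 e).add_right_cancel' 1)
  rcases hne.lt_or_gt with hlt | hgt
  · simpa only [hlt, true_iff] using (hc x y hlt).2 h
  · rw [h, ← (hc y x hgt).2 h.symm, iff_false_left hgt.not_gt, Nat.succ_eq_add_one, not_lt,
      hne'.le_iff_lt]

theorem SignCompatible.add_lt_add_iff {ψ : ℕ → L} (hψ : IsCyclicLabelling n ψ)
    (hc : SignCompatible s Nat.succ ψ w) {x y : ℕ} (hxy : ¬x ≡ y [MOD n]) {r : ℕ}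
    (h : ∀ i < r, w (x + i) = w (y + i)) :
    ψ (x + r) < ψ (y + r) ↔ (ψ x < ψ y ↔ wordSign s (fun i ↦ w (x + i)) r = 1) := by
  induction r with
  | zero => simp [wordSign]
  | succ r ih =>
    have hxy' : ¬x + r ≡ y + r [MOD n] := fun e ↦ hxy (e.add_right_cancel' r)
    rw [← add_assoc, ← add_assoc, hc.succ_lt_succ_iff hψ hxy' (h r r.lt_succ_self),
      ih fun i hi ↦ h i (hi.trans r.lt_succ_self), wordSign, wordSign, prod_range_succ]
    rcases Int.units_eq_one_or (s (w (x + r))) with e | e <;>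
      rcases Int.units_eq_one_or (∏ i ∈ range r, s (w (x + i))) with e' | e' <;> simp [e, e']

theorem dvd_of_wordSign_eq_one {ψ : ℕ → L} (hψ : IsCyclicLabelling n ψ)
    (hc : SignCompatible s Nat.succ ψ w) (hn : n ≠ 0) {t : ℕ} (ht : Periodic w t)
    (hsign : wordSign s w t = 1) : n ∣ t := by
  by_contra hdvd
  have hne (c : ℕ) : ¬t * c ≡ t * (c + 1) [MOD n] := fun h ↦
    hdvd (by simpa [mul_add] using (Nat.modEq_iff_dvd' (Nat.mul_le_mul_left t c.le_succ)).1 h)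
  have hshift (c i : ℕ) : w (t * c + i) = w i := by
    rw [add_comm, mul_comm]
    exact ht.nat_mul c i
  have hstep (c : ℕ) : ψ (t * (c + 1)) < ψ (t * (c + 1 + 1)) ↔ ψ (t * c) < ψ (t * (c + 1)) := by
    have := hc.add_lt_add_iff hψ (hne c) (r := t) fun i _ ↦ (hshift c i).trans (hshift _ i).symm
    simpa only [hshift, hsign, iff_true, ← mul_add_one] using this
  have hall (c : ℕ) : ψ (t * c) < ψ (t * (c + 1)) ↔ ψ (t * 0) < ψ (t * 1) := by
    induction c with
    | zero => rfl
    | succ c ih => exact (hstep c).trans ih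
  have hloop : ψ (t * n) = ψ (t * 0) := (hψ _ _).2 (by simp [Nat.ModEq])
  have hinj : Injective fun c ↦ ψ (t * c) := by
    rcases lt_or_ge (ψ (t * 0)) (ψ (t * 1)) with hlt | hge
    · exact (strictMono_nat_of_lt_succ fun c ↦ (hall c).2 hlt).injective
    · refine (strictAnti_nat_of_succ_lt fun c ↦ ?_).injective
      exact (not_lt.1 fun h ↦ hge.not_gt ((hall c).1 h)).lt_of_ne fun e ↦ hne c ((hψ _ _).1 e.symm)
  exact hn (hinj hloop)

theorem SignCompatible.wordPeriod_eq_or {ψ : ℕ → L} (hψ : IsCyclicLabelling n ψ)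
    (hc : SignCompatible s Nat.succ ψ w) (hw : Periodic w n) (hn : n ≠ 0) :
    wordPeriod w = n ∨ 2 * wordPeriod w = n ∧ wordSign s w (wordPeriod w) = -1 := by
  have hp := periodic_wordPeriod w
  have hdvd := wordPeriod_dvd_iff.2 hw
  rcases Int.units_eq_one_or (wordSign s w (wordPeriod w)) with h | h
  · exact .inl (hdvd.antisymm (dvd_of_wordSign_eq_one hψ hc hn hp h))
  · have hdvd' : n ∣ wordPeriod w * 2 := dvd_of_wordSign_eq_one hψ hc hn
      (wordPeriod_dvd_iff.1 (dvd_mul_right _ 2)) (by rw [wordSign_mul hp, h]; rfl)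
    obtain ⟨e, rfl⟩ := hdvd
    have he : e ∣ 2 := Nat.dvd_of_mul_dvd_mul_left (by lia) hdvd'
    rcases (Nat.dvd_prime Nat.prime_two).1 he with rfl | rfl
    · exact .inl (mul_one _).symm
    · exact .inr ⟨mul_comm _ _, h⟩

-- Positions not congruent modulo the least period are compared by the first letter in which
-- their tails differ, so the word determines their order.
theorem lt_iff_lt_of_forall_modEq_wordPeriod {L' : Type*} [LinearOrder L'] {ψ : ℕ → L}
    {ψ' : ℕ → L'} (hψ : IsCyclicLabelling n ψ) (hψ' : IsCyclicLabelling n ψ')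
    (hc : SignCompatible s Nat.succ ψ w) (hc' : SignCompatible s Nat.succ ψ' w)
    (hw : Periodic w n) (hn : n ≠ 0)
    (h : ∀ x y, x ≡ y [MOD wordPeriod w] → (ψ x < ψ y ↔ ψ' x < ψ' y)) (x y : ℕ) :
    ψ x < ψ y ↔ ψ' x < ψ' y := by
  by_cases hxy : x ≡ y [MOD wordPeriod w]
  · exact h x y hxy
  have hdiff : ∃ r, w (x + r) ≠ w (y + r) := by
    simpa only [not_forall] using (modEq_wordPeriod_iff hw hn).not.1 hxy
  have hfirst (i : ℕ) (hi : i < Nat.find hdiff) : w (x + i) = w (y + i) :=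
    not_not.1 (Nat.find_min hdiff hi)
  have hne {r} (hr : w (x + r) ≠ w (y + r)) : ¬x ≡ y [MOD n] :=
    fun e ↦ hr (periodic_eq_of_modEq hw (e.add_right r))
  have hr := Nat.find_spec hdiff
  have hr' : ¬x + Nat.find hdiff ≡ y + Nat.find hdiff [MOD n] :=
    fun e ↦ hr (periodic_eq_of_modEq hw e)
  have e := hc.add_lt_add_iff hψ (hne hr) hfirst
  have e' := hc'.add_lt_add_iff hψ' (hne hr) hfirst
  rw [hc.lt_iff_of_ne hr fun e ↦ hr' ((hψ _ _).1 e)] at e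
  rw [hc'.lt_iff_of_ne hr fun e ↦ hr' ((hψ' _ _).1 e)] at e'
  tauto

theorem IsCyclicLabelling.ext_of_lt_iff_lt {ψ ψ' : ℕ → Fin n} (hψ : IsCyclicLabelling n ψ)
    (hψ' : IsCyclicLabelling n ψ') (h : ∀ x y, ψ x < ψ y ↔ ψ' x < ψ' y) : ψ = ψ' := by
  have hmono : StrictMono (ψ' ∘ surjInv hψ.surjective) := fun i j hij ↦ by
    simpa only [comp_apply, ← h, surjInv_eq] using hij
  funext x
  calc ψ x = ψ' (surjInv hψ.surjective (ψ x)) := (congrFun hmono.eq_id (ψ x)).symm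
    _ = ψ' x := (hψ' _ _).2 ((hψ _ _).1 (surjInv_eq hψ.surjective (ψ x)))

theorem IsCyclicLabelling.exists_fin {ψ : ℕ → L} (hψ : IsCyclicLabelling n ψ) (hn : n ≠ 0) :
    ∃ ψ' : ℕ → Fin n, ∀ x y, ψ' x < ψ' y ↔ ψ x < ψ y := by
  have hcard : #((range n).image ψ) = n := by
    rw [card_image_of_injOn, card_range]
    exact fun x hx y hy h ↦ ((hψ x y).1 h).eq_of_lt_of_lt (mem_range.1 hx) (mem_range.1 hy)
  have hmem (x : ℕ) : ψ x ∈ (range n).image ψ :=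
    mem_image.2 ⟨x % n, mem_range.2 (Nat.mod_lt x (Nat.pos_of_ne_zero hn)),
      (hψ _ _).2 (Nat.mod_modEq x n)⟩
  exact ⟨fun x ↦ (orderIsoOfFin _ hcard).symm ⟨ψ x, hmem x⟩, fun x y ↦ by simp⟩

end Labellings

section SignedTails

open Finset Function

variable {A L : Type*}

/-- The signed reading of a word from the position `x` on, its letters being valued by `v`: each
value is multiplied by the sign of the letters read before it, so that the lexicographic order is
reversed by every letter of sign `-1`. -/
def signedTail (s : A → ℤˣ) (v : A → ℤ) (w : ℕ → A) (x r : ℕ) : ℤ :=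
  wordSign s (fun i ↦ w (x + i)) r * v (w (x + r))

theorem signedTail_zero (s : A → ℤˣ) (v : A → ℤ) (w : ℕ → A) (x : ℕ) :
    signedTail s v w x 0 = v (w x) := by
  simp [signedTail, wordSign]

theorem signedTail_add_one (s : A → ℤˣ) (v : A → ℤ) (w : ℕ → A) (x r : ℕ) :
    signedTail s v w x (r + 1) = s (w x) * signedTail s v w (x + 1) r := by
  simp only [signedTail, wordSign, prod_range_succ', Units.val_mul, add_zero, add_assoc,
    add_comm 1]
  ring

theorem signedTail_eq_iff {s : A → ℤˣ} {v : A → ℤ} (hv : Injective v) {w : ℕ → A} {x y : ℕ} :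
    signedTail s v w x = signedTail s v w y ↔ ∀ r, w (x + r) = w (y + r) := by
  constructor
  · intro h r
    induction r generalizing x y with
    | zero => exact hv (by simpa only [signedTail_zero, add_zero] using congrFun h 0)
    | succ r ih =>
      have h0 : w x = w y := hv (by simpa only [signedTail_zero] using congrFun h 0)
      have htail : signedTail s v w (x + 1) = signedTail s v w (y + 1) := funext fun j ↦ by
        have := congrFun h (j + 1)
        rwa [signedTail_add_one, signedTail_add_one, h0, Units.mul_right_inj] at this
      simpa only [add_assoc, add_comm 1] using ih htail
  · intro h
    funext r
    simp only [signedTail, h]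

theorem isCyclicLabelling_signedTail (s : A → ℤˣ) {v : A → ℤ} (hv : Injective v) {w : ℕ → A}
    {n : ℕ} (hw : Periodic w n) (hn : n ≠ 0) :
    IsCyclicLabelling (wordPeriod w) fun x ↦ toLex (signedTail s v w x) := fun x y ↦ by
  rw [toLex_inj, signedTail_eq_iff hv, modEq_wordPeriod_iff hw hn]

theorem signCompatible_signedTail [LinearOrder A] (s : A → ℤˣ) {v : A → ℤ} (hv : StrictMono v)
    (w : ℕ → A) : SignCompatible s Nat.succ (fun x ↦ toLex (signedTail s v w x)) w := by
  intro x y h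
  obtain ⟨r | r, heq, hlt⟩ : ∃ r, (∀ j < r, signedTail s v w x j = signedTail s v w y j) ∧
    signedTail s v w x r < signedTail s v w y r := h
  · rw [signedTail_zero, signedTail_zero, hv.lt_iff_lt] at hlt
    exact ⟨hlt.le, fun h ↦ absurd h hlt.ne⟩
  · have h0 : w x = w y := hv.injective (by simpa only [signedTail_zero] using heq 0 r.succ_pos)
    refine ⟨h0.le, fun _ ↦ ?_⟩
    have htail (j : ℕ) (hj : j < r) : signedTail s v w (x + 1) j = signedTail s v w (y + 1) j := by
      have := heq (j + 1) (Nat.succ_lt_succ hj)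
      rwa [signedTail_add_one, signedTail_add_one, h0, Units.mul_right_inj] at this
    rw [signedTail_add_one, signedTail_add_one, ← h0] at hlt
    rcases Int.units_eq_one_or (s (w x)) with hs | hs
    · rw [hs, Units.val_one, one_mul, one_mul] at hlt
      exact iff_of_true ⟨r, htail, hlt⟩ hs
    · rw [hs, Units.val_neg, Units.val_one, neg_one_mul, neg_one_mul, neg_lt_neg_iff] at hlt
      have hgt : toLex (signedTail s v w (y + 1)) < toLex (signedTail s v w (x + 1)) :=
        ⟨r, fun j hj ↦ (htail j hj).symm, hlt⟩
      exact iff_of_false hgt.not_gt (by rw [hs]; decide)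

-- One turn of length `p` flips the sign of the letters read so far, which tells antipodal positions
-- apart.
theorem isCyclicLabelling_prod_wordSign {s : A → ℤˣ} {w : ℕ → A} {p : ℕ} {ψ : ℕ → L}
    (hψ : IsCyclicLabelling p ψ) (hw : Periodic w p) (hp : p ≠ 0) (hs : wordSign s w p = -1) :
    IsCyclicLabelling (2 * p) fun x ↦ toLex (ψ x, (wordSign s w x : ℤ)) := by
  intro x y
  wlog hxy : x ≤ y generalizing x y
  · rw [eq_comm, this y x (le_of_not_ge hxy), Nat.ModEq.comm]
  obtain ⟨z, rfl⟩ := Nat.exists_eq_add_of_le hxy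
  rw [toLex_inj, Prod.mk.injEq, hψ, Units.val_inj, Nat.modEq_iff_dvd' hxy,
    Nat.modEq_iff_dvd' hxy, Nat.add_sub_cancel_left]
  by_cases hz : p ∣ z
  · obtain ⟨e, rfl⟩ := hz
    rw [and_iff_right (dvd_mul_right p e), add_comm x, wordSign_mul_add hw, hs, right_eq_mul,
      neg_one_pow_eq_one_iff_even (by decide), mul_comm 2,
      Nat.mul_dvd_mul_iff_left (Nat.pos_of_ne_zero hp), even_iff_two_dvd]
  · exact iff_of_false (hz ·.1) fun h ↦ hz (dvd_of_mul_left_dvd h)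

theorem SignCompatible.prod_wordSign [LinearOrder A] [LinearOrder L] {s : A → ℤˣ} {w : ℕ → A}
    {p : ℕ} {ψ : ℕ → L} (hc : SignCompatible s Nat.succ ψ w) (hψ : IsCyclicLabelling p ψ)
    (hw : Periodic w p) :
    SignCompatible s Nat.succ (fun x ↦ toLex (ψ x, (wordSign s w x : ℤ))) w := by
  intro x y h
  have hsucc : ψ x = ψ y ↔ ψ x.succ = ψ y.succ := by
    rw [hψ, hψ]
    exact ⟨fun h ↦ h.add_right 1, fun h ↦ h.add_right_cancel' 1⟩
  rw [Prod.Lex.toLex_lt_toLex] at h ⊢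
  rcases h with h | ⟨heq, hlt⟩
  · refine ⟨(hc x y h).1, fun hxy ↦ ?_⟩
    rw [← (hc x y h).2 hxy, or_iff_left fun e ↦ h.ne (hsucc.2 e.1)]
  · have hxy : w x = w y := periodic_eq_of_modEq hw ((hψ x y).1 heq)
    refine ⟨hxy.le, fun _ ↦ ?_⟩
    have hsign (z : ℕ) : wordSign s w z.succ = wordSign s w z * s (w z) := prod_range_succ ..
    simp only [hsucc.1 heq, lt_irrefl, false_or, true_and, hsign, hxy, Units.val_mul]
    rcases Int.units_eq_one_or (s (w y)) with hs | hs
    · simpa [hs] using hlt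
    · simpa [hs] using hlt.le

end SignedTails

section CountingLabellings

open Finset Function

variable {A : Type*} [LinearOrder A] {s : A → ℤˣ} {w : ℕ → A} {n : ℕ}

/-- The cyclic labellings of length `n` that are compatible with the word `w`, the labels being
`0, …, n - 1`. -/
def compatibleLabellings (s : A → ℤˣ) (n : ℕ) (w : ℕ → A) : Finset (ℕ → Fin n) :=
  {ψ ∈ periodicWords (Fin n) n | IsCyclicLabelling n ψ ∧ SignCompatible s Nat.succ ψ w}

theorem mem_compatibleLabellings (hn : n ≠ 0) {ψ : ℕ → Fin n} :
    ψ ∈ compatibleLabellings s n w ↔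
      IsCyclicLabelling n ψ ∧ SignCompatible s Nat.succ ψ w := by
  rw [compatibleLabellings, mem_filter, mem_periodicWords hn]
  exact and_iff_right_of_imp fun h ↦ h.1.periodic

theorem compatibleLabellings_nonempty_of_signCompatible {L : Type*} [LinearOrder L] {ψ : ℕ → L}
    (hψ : IsCyclicLabelling n ψ) (hc : SignCompatible s Nat.succ ψ w) (hn : n ≠ 0) :
    (compatibleLabellings s n w).Nonempty := by
  obtain ⟨ψ', h⟩ := hψ.exists_fin hn
  refine ⟨ψ', (mem_compatibleLabellings hn).2 ⟨fun x y ↦ ?_, fun x y ↦ ?_⟩⟩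
  · simp only [← hψ x y, le_antisymm_iff, ← not_lt, h]
  · simpa only [h] using hc x y

theorem compatibleLabellings_nonempty [Finite A] (hw : Periodic w n) (hn : n ≠ 0)
    (h : wordPeriod w = n ∨ 2 * wordPeriod w = n ∧ wordSign s w (wordPeriod w) = -1) :
    (compatibleLabellings s n w).Nonempty := by
  have := Fintype.ofFinite A
  obtain ⟨v, hv⟩ : ∃ v : A → ℤ, StrictMono v :=
    ⟨fun a ↦ ((Fintype.orderIsoFinOfCardEq A rfl).symm a : ℕ), fun a b hab ↦ by simpa using hab⟩
  have hψ := isCyclicLabelling_signedTail s hv.injective hw hn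
  have hc := signCompatible_signedTail s hv w
  rcases h with rfl | ⟨rfl, hs⟩
  · exact compatibleLabellings_nonempty_of_signCompatible hψ hc hn
  · have hp := periodic_wordPeriod w
    exact compatibleLabellings_nonempty_of_signCompatible
      (isCyclicLabelling_prod_wordSign hψ hp (by lia) hs) (hc.prod_wordSign hψ hp) hn

theorem compatibleLabellings_ext_of_wordPeriod_eq (hn : n ≠ 0) (h : wordPeriod w = n)
    {ψ ψ' : ℕ → Fin n} (hψ : ψ ∈ compatibleLabellings s n w)
    (hψ' : ψ' ∈ compatibleLabellings s n w) : ψ = ψ' := by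
  obtain ⟨hψ, hc⟩ := (mem_compatibleLabellings hn).1 hψ
  obtain ⟨hψ', hc'⟩ := (mem_compatibleLabellings hn).1 hψ'
  refine hψ.ext_of_lt_iff_lt hψ' (lt_iff_lt_of_forall_modEq_wordPeriod hψ hψ' hc hc'
    (h ▸ periodic_wordPeriod w) hn fun x y hxy ↦ ?_)
  rw [h] at hxy
  exact iff_of_false ((hψ x y).2 hxy).not_lt ((hψ' x y).2 hxy).not_lt

theorem not_zero_modEq_two_mul {p : ℕ} (hp : p ≠ 0) : ¬0 ≡ p [MOD 2 * p] := fun h ↦ by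
  have := Nat.le_of_dvd (Nat.pos_of_ne_zero hp) ((Nat.modEq_iff_dvd' p.zero_le).1 h)
  lia

theorem modEq_two_mul_or_of_modEq {p x y : ℕ} (h : x ≡ y [MOD p]) :
    x ≡ y [MOD 2 * p] ∨ y ≡ x + p [MOD 2 * p] := by
  simp only [Nat.modEq_iff_dvd] at h ⊢
  obtain ⟨k, hk⟩ := h
  rcases Int.even_or_odd' k with ⟨c, rfl | rfl⟩
  · exact .inl ⟨c, by push_cast; linear_combination hk⟩
  · exact .inr ⟨-c, by push_cast; linear_combination -hk⟩

theorem compatibleLabellings_ext_of_wordPeriod_eq_half {p : ℕ} (hp : p ≠ 0)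
    (h : wordPeriod w = p) {ψ ψ' : ℕ → Fin (2 * p)} (hψ : ψ ∈ compatibleLabellings s (2 * p) w)
    (hψ' : ψ' ∈ compatibleLabellings s (2 * p) w) (h0 : ψ 0 < ψ p ↔ ψ' 0 < ψ' p) : ψ = ψ' := by
  have hn : 2 * p ≠ 0 := by lia
  have hw : Periodic w p := h ▸ periodic_wordPeriod w
  obtain ⟨hψ, hc⟩ := (mem_compatibleLabellings hn).1 hψ
  obtain ⟨hψ', hc'⟩ := (mem_compatibleLabellings hn).1 hψ'
  have hhalf := not_zero_modEq_two_mul hp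
  have hantipode (x : ℕ) : ψ x < ψ (x + p) ↔ ψ' x < ψ' (x + p) := by
    have hx (i : ℕ) (_ : i < x) : w (0 + i) = w (p + i) := by rw [zero_add, add_comm, hw]
    have e := hc.add_lt_add_iff hψ hhalf hx
    have e' := hc'.add_lt_add_iff hψ' hhalf hx
    rw [zero_add, add_comm p] at e e'
    rw [e, e', h0]
  refine hψ.ext_of_lt_iff_lt hψ' (lt_iff_lt_of_forall_modEq_wordPeriod hψ hψ' hc hc'
    (hw.nat_mul 2) hn fun x y hxy ↦ ?_)
  rcases modEq_two_mul_or_of_modEq (h ▸ hxy) with hxy | hxy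
  · exact iff_of_false ((hψ x y).2 hxy).not_lt ((hψ' x y).2 hxy).not_lt
  · rw [(hψ _ _).2 hxy, (hψ' _ _).2 hxy, hantipode]

theorem comp_add_mem_compatibleLabellings (hn : n ≠ 0) {p : ℕ} (hw : Periodic w p)
    {ψ : ℕ → Fin n} (hψ : ψ ∈ compatibleLabellings s n w) :
    (fun x ↦ ψ (x + p)) ∈ compatibleLabellings s n w := by
  obtain ⟨hψ, hc⟩ := (mem_compatibleLabellings hn).1 hψ
  refine (mem_compatibleLabellings hn).2 ⟨fun x y ↦ ?_, fun x y h ↦ ?_⟩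
  · rw [hψ]
    exact ⟨fun h ↦ h.add_right_cancel' p, fun h ↦ h.add_right p⟩
  · simpa only [hw x, hw y, Nat.succ_eq_add_one, add_right_comm] using hc _ _ h

theorem card_compatibleLabellings_of_wordPeriod_eq_half {p : ℕ} (hp : p ≠ 0)
    (h : wordPeriod w = p) (hne : (compatibleLabellings s (2 * p) w).Nonempty) :
    #(compatibleLabellings s (2 * p) w) = 2 := by
  have hn : 2 * p ≠ 0 := by lia
  obtain ⟨ψ, hψ⟩ := hne
  have hψ₂ := comp_add_mem_compatibleLabellings hn (h ▸ periodic_wordPeriod w) hψ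
  have hcyc := ((mem_compatibleLabellings hn).1 hψ).1
  have h0 : ψ 0 ≠ ψ p := fun e ↦ not_zero_modEq_two_mul hp ((hcyc 0 p).1 e)
  have hloop : ψ (p + p) = ψ 0 := (hcyc _ _).2 (by simp [Nat.ModEq, ← two_mul])
  refine card_eq_two.2 ⟨ψ, fun x ↦ ψ (x + p), fun e ↦ h0 (by simpa using congrFun e 0), ?_⟩
  ext ψ'
  rw [mem_insert, mem_singleton]
  refine ⟨fun hψ' ↦ ?_, by rintro (rfl | rfl) <;> assumption⟩
  by_cases hlt : ψ' 0 < ψ' p ↔ ψ 0 < ψ p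
  · exact .inl (compatibleLabellings_ext_of_wordPeriod_eq_half hp h hψ' hψ hlt)
  · refine .inr (compatibleLabellings_ext_of_wordPeriod_eq_half hp h hψ' hψ₂ ?_)
    rw [zero_add, hloop, ← h0.symm.le_iff_lt, ← not_lt]
    tauto

theorem card_compatibleLabellings [Finite A] (hw : Periodic w n) (hn : n ≠ 0) :
    #(compatibleLabellings s n w) = labellingCount s n w := by
  by_cases h : wordPeriod w = n ∨ 2 * wordPeriod w = n ∧ wordSign s w (wordPeriod w) = -1
  · have hne := compatibleLabellings_nonempty hw hn h
    rcases h with h | ⟨rfl, hs⟩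
    · obtain ⟨ψ, hψ⟩ := hne
      rw [labellingCount, if_pos h, if_neg (by lia), add_zero, card_eq_one]
      exact ⟨ψ, eq_singleton_iff_unique_mem.2 ⟨hψ, fun ψ' hψ' ↦
        compatibleLabellings_ext_of_wordPeriod_eq hn h hψ' hψ⟩⟩
    · rw [labellingCount, if_neg (by lia), if_pos rfl, if_pos hs, zero_add,
        card_compatibleLabellings_of_wordPeriod_eq_half (by lia) rfl hne]
  · have hempty : compatibleLabellings s n w = ∅ := eq_empty_of_forall_notMem fun ψ hψ ↦ by
      obtain ⟨hψ, hc⟩ := (mem_compatibleLabellings hn).1 hψ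
      exact h (hc.wordPeriod_eq_or hψ hw hn)
    obtain ⟨h, h'⟩ := not_or.1 h
    rw [hempty, card_empty, labellingCount, if_neg h, ← ite_and, if_neg h']

end CountingLabellings

section CyclicPermutations

open Finset Function

theorem isCyclicPerm_iff_isCycleOn_univ {n : ℕ} (hn : n ≠ 0) (π : Equiv.Perm (Fin n)) :
    IsCyclicPerm n π ↔ π.IsCycleOn (univ : Finset (Fin n)) := by
  rw [IsCyclicPerm, fullCycleType, coe_univ]
  obtain rfl | hn : n = 1 ∨ 2 ≤ n := by lia
  · obtain rfl : π = 1 := Subsingleton.elim _ _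
    simpa using (inferInstance : Subsingleton (Fin 1))
  have hnontrivial : (Set.univ : Set (Fin n)).Nontrivial :=
    Set.nontrivial_univ_iff.2 (Fin.nontrivial_iff_two_le.2 hn)
  constructor
  · intro h
    have hcard := congrArg Multiset.card h
    rw [Multiset.card_add, Multiset.card_replicate, Multiset.card_singleton] at hcard
    have hne : π.cycleType.card ≠ 0 := fun h0 ↦ by
      rw [Equiv.Perm.card_cycleType_eq_zero] at h0
      subst h0
      simp at hcard
      lia
    have hsupport : π.support = univ := eq_univ_of_card _ (by
      have := card_le_univ π.support
      rw [Fintype.card_fin] at this ⊢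
      lia)
    have hcycle : π.IsCycle := Equiv.Perm.card_cycleType_eq_one.1 (by lia)
    convert hcycle.isCycleOn
    simpa [Equiv.Perm.mem_support, Set.ext_iff, Finset.ext_iff, eq_comm] using hsupport
  · intro h
    have hsupport : π.support = univ := eq_univ_of_forall fun x ↦
      Equiv.Perm.mem_support.2 (h.apply_ne hnontrivial (Set.mem_univ x))
    have hcycle : π.IsCycle :=
      Equiv.Perm.isCycle_iff_exists_isCycleOn.2 ⟨_, hnontrivial, h, fun _ _ ↦ Set.mem_univ _⟩
    rw [hcycle.cycleType, hsupport]
    simp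

theorem isCyclicPerm_iff_isCyclicLabelling {n : ℕ} (hn : n ≠ 0) (π : Equiv.Perm (Fin n))
    (x : Fin n) : IsCyclicPerm n π ↔ IsCyclicLabelling n fun j ↦ (π ^ j) x := by
  rw [isCyclicPerm_iff_isCycleOn_univ hn]
  constructor
  · intro h j k
    rw [h.pow_apply_eq_pow_apply (mem_univ x), card_fin]
  · intro h
    rw [coe_univ]
    refine ⟨π.bijective.bijOn_univ, fun y _ z _ ↦ ?_⟩
    obtain ⟨j, rfl⟩ := h.surjective y
    obtain ⟨k, rfl⟩ := h.surjective z
    simpa using Equiv.Perm.SameCycle.refl π x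

theorem signCompatible_comp_iff {A L X Y : Type*} [LinearOrder A] [LT L] {s : A → ℤˣ} {T : X → X}
    {T' : Y → Y} {h : Y → X} (hsurj : Surjective h) (hT : Semiconj h T' T) {ψ : X → L}
    {w : X → A} : SignCompatible s T' (ψ ∘ h) (w ∘ h) ↔ SignCompatible s T ψ w := by
  simp only [SignCompatible, hsurj.forall₂, comp_apply, hT.eq]

theorem IsCyclicLabelling.exists_perm {n : ℕ} {ψ : ℕ → Fin n} (hψ : IsCyclicLabelling n ψ) :
    ∃ π : Equiv.Perm (Fin n), ∀ j, (π ^ j) (ψ 0) = ψ j := by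
  have hinj : Injective fun l ↦ ψ (surjInv hψ.surjective l + 1) := fun k l h ↦ by
    simpa only [surjInv_eq] using (hψ _ _).2 (((hψ _ _).1 h).add_right_cancel' 1)
  refine ⟨.ofBijective _ (Finite.injective_iff_bijective.1 hinj), fun j ↦ ?_⟩
  induction j with
  | zero => rfl
  | succ j ih =>
    rw [pow_succ', Equiv.Perm.mul_apply, ih, Equiv.ofBijective_apply, hψ]
    exact ((hψ _ _).1 (surjInv_eq hψ.surjective (ψ j))).add_right 1

theorem sum_cyclicSet_sum {n : ℕ} (hn : n ≠ 0) (F : (ℕ → Fin n) → ℕ) :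
    ∑ π ∈ cyclicSet n, ∑ x, F (fun j ↦ (π ^ j) x) =
      ∑ ψ ∈ periodicWords (Fin n) n with IsCyclicLabelling n ψ, F ψ := by
  have hcyclic {π : Equiv.Perm (Fin n)} : π ∈ cyclicSet n ↔ IsCyclicPerm n π := mem_filter_univ π
  rw [← sum_product']
  refine sum_bij (fun p _ ↦ fun j ↦ (p.1 ^ j) p.2) ?_ ?_ ?_ fun _ _ ↦ rfl
  · rintro ⟨π, x⟩ hπ
    have hψ := (isCyclicPerm_iff_isCyclicLabelling hn π x).1 (hcyclic.1 (mem_product.1 hπ).1)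
    exact mem_filter.2 ⟨(mem_periodicWords hn).2 hψ.periodic, hψ⟩
  · rintro ⟨π, x⟩ hπ ⟨π', x'⟩ - h
    obtain rfl : x = x' := congrFun h 0
    have hψ := (isCyclicPerm_iff_isCyclicLabelling hn π x).1 (hcyclic.1 (mem_product.1 hπ).1)
    refine Prod.ext (Equiv.ext fun y ↦ ?_) rfl
    obtain ⟨j, rfl⟩ := hψ.surjective y
    calc π ((π ^ j) x) = (π ^ (j + 1)) x := by rw [pow_succ', Equiv.Perm.mul_apply]
      _ = (π' ^ (j + 1)) x := congrFun h (j + 1)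
      _ = π' ((π' ^ j) x) := by rw [pow_succ', Equiv.Perm.mul_apply]
      _ = π' ((π ^ j) x) := congrArg π' (congrFun h j).symm
  · intro ψ hψ
    obtain ⟨π, hπ⟩ := (mem_filter.1 hψ).2.exists_perm
    refine ⟨(π, ψ 0), mem_product.2 ⟨hcyclic.2 ?_, mem_univ _⟩, funext hπ⟩
    rw [isCyclicPerm_iff_isCyclicLabelling hn π (ψ 0), funext hπ]
    exact (mem_filter.1 hψ).2

theorem mul_sum_card_signCompatible {A : Type*} [LinearOrder A] [Fintype A] {s : A → ℤˣ} {n : ℕ}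
    (hn : n ≠ 0) :
    n * ∑ π ∈ cyclicSet n, #{f : Fin n → A | SignCompatible s π id f} =
      labelledWordCount A s n := by
  have hword (π : Equiv.Perm (Fin n)) (hπ : π ∈ cyclicSet n) (x : Fin n) :
      #{f : Fin n → A | SignCompatible s π id f} =
        #{w ∈ periodicWords A n | SignCompatible s Nat.succ (fun j ↦ (π ^ j) x) w} := by
    have hψ := (isCyclicPerm_iff_isCyclicLabelling hn π x).1 ((mem_filter_univ π).1 hπ)
    have hstep : Semiconj (fun j ↦ (π ^ j) x) Nat.succ π := fun j ↦
      congrFun (congrArg DFunLike.coe (pow_succ' π j)) x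
    rw [← hψ.card_filter_comp hn hψ.surjective fun w ↦
      SignCompatible s Nat.succ (fun j ↦ (π ^ j) x) w]
    simp only [← signCompatible_comp_iff hψ.surjective hstep, id_comp]
    congr!
  calc n * ∑ π ∈ cyclicSet n, #{f : Fin n → A | SignCompatible s π id f}
      = ∑ π ∈ cyclicSet n, ∑ x : Fin n,
          #{w ∈ periodicWords A n | SignCompatible s Nat.succ (fun j ↦ (π ^ j) x) w} := by
        rw [mul_sum]
        refine sum_congr rfl fun π hπ ↦ ?_
        rw [← sum_congr rfl fun x _ ↦ hword π hπ x, sum_const, card_fin, smul_eq_mul]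
    _ = ∑ ψ ∈ periodicWords (Fin n) n with IsCyclicLabelling n ψ,
          #{w ∈ periodicWords A n | SignCompatible s Nat.succ ψ w} :=
        sum_cyclicSet_sum hn fun ψ ↦ #{w ∈ periodicWords A n | SignCompatible s Nat.succ ψ w}
    _ = ∑ w ∈ periodicWords A n, #(compatibleLabellings s n w) := by
        refine (sum_card_bipartiteAbove_eq_sum_card_bipartiteBelow
          fun ψ w ↦ SignCompatible s Nat.succ ψ w).trans ?_
        simp only [bipartiteBelow, filter_filter, compatibleLabellings]
    _ = labelledWordCount A s n := sum_congr rfl fun w hw ↦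
        card_compatibleLabellings ((mem_periodicWords hn).1 hw) hn

end CyclicPermutations

section GeneratingFunction

open Finset

theorem sum_altSign_fin (k : ℕ) : ∑ a : Fin (2 * k), ((altSign ∘ Fin.val) a : ℤ) = 0 := by
  simp only [Function.comp_apply]
  rw [Fin.sum_univ_eq_sum_range fun i ↦ (altSign i : ℤ)]
  induction k with
  | zero => rfl
  | succ k ih =>
    rw [mul_add_one, sum_range_succ, sum_range_succ, ih, altSign_two_mul, altSign_two_mul_add_one]
    rfl

open PowerSeries in
theorem mul_sum_pk_term_eq {n : ℕ} (hn : 1 ≤ n) :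
    (n : PowerSeries ℚ) * ∑ π ∈ cyclicSet n,
        4 ^ (pk n π + 1) * X ^ (pk n π + 1) * (1 + X) ^ (n - 1 - 2 * pk n π) =
      2 * (1 - X) ^ (n + 1) * PowerSeries.mk fun k ↦
        (labelledWordCount (Fin (2 * k)) (altSign ∘ Fin.val) n : ℚ) := by
  simp only [pk_term_eq_mul_mk_card_signCompatible hn, ← mul_sum]
  rw [mul_left_comm]
  congr 1
  ext k
  rw [coeff_mk, ← mul_sum_card_signCompatible (Nat.one_le_iff_ne_zero.1 hn),
    ← map_natCast (C (R := ℚ)), coeff_C_mul, map_sum]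
  simp only [coeff_mk, Nat.cast_mul, Nat.cast_sum]

open PowerSeries in
theorem mk_labelledWordCount {n : ℕ} (hn : n ≠ 0) :
    (PowerSeries.mk fun k ↦ (labelledWordCount (Fin (2 * k)) (altSign ∘ Fin.val) n : ℚ)) =
      ∑ d ∈ n.divisors with Odd d, ((ArithmeticFunction.moebius d : ℤ) : PowerSeries ℚ) *
        2 ^ (n / d) * PowerSeries.mk fun k ↦ (k : ℚ) ^ (n / d) := by
  ext k
  rw [coeff_mk, labelledWordCount_eq (sum_altSign_fin k) hn, map_sum]
  refine sum_congr rfl fun d _ ↦ ?_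
  have hC : ((ArithmeticFunction.moebius d : ℤ) : PowerSeries ℚ) * 2 ^ (n / d) =
      C ((ArithmeticFunction.moebius d : ℚ) * 2 ^ (n / d)) := by
    rw [map_mul, map_pow, map_intCast, map_ofNat]
  rw [hC, coeff_C_mul, coeff_mk, Fintype.card_fin, Nat.cast_mul, Nat.cast_ofNat, mul_pow, mul_assoc]

open PowerSeries in
theorem sum_moebius_mul_eulerianA {n : ℕ} (hn : 1 ≤ n) :
    ∑ d ∈ n.divisors with Odd d, ((ArithmeticFunction.moebius d : ℤ) : PowerSeries ℚ) *
        2 ^ (n / d + 1) * (1 - X) ^ (n - n / d) * (eulerianA (n / d) : PowerSeries ℚ) =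
      2 * (1 - X) ^ (n + 1) * PowerSeries.mk fun k ↦
        (labelledWordCount (Fin (2 * k)) (altSign ∘ Fin.val) n : ℚ) := by
  rw [mk_labelledWordCount (Nat.one_le_iff_ne_zero.1 hn), mul_sum]
  refine sum_congr rfl fun d hd ↦ ?_
  have hpos : 1 ≤ n / d :=
    Nat.div_pos (Nat.divisor_le (mem_filter.1 hd).1) (Nat.pos_of_mem_divisors (mem_filter.1 hd).1)
  have hexp : n + 1 = n - n / d + (n / d + 1) := by
    have := Nat.div_le_self n d
    lia
  rw [coe_eulerianA hpos, hexp, pow_add (1 - X), pow_succ (2 : PowerSeries ℚ)]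
  ring

end GeneratingFunction

theorem stmt3 (n : ℕ) (hn : 1 ≤ n) :
    (n : Polynomial ℚ)
        * ∑ π ∈ cyclicSet n,
            (4 : Polynomial ℚ) ^ (pk n π + 1) * Polynomial.X ^ (pk n π + 1)
              * (1 + Polynomial.X) ^ (n - 1 - 2 * pk n π)
      = ∑ d ∈ n.divisors.filter (fun d => Odd d),
          ((ArithmeticFunction.moebius d : ℤ) : Polynomial ℚ)
            * 2 ^ (n / d + 1) * (1 - Polynomial.X) ^ (n - n / d)
            * eulerianA (n / d) := by
  have hseries := (mul_sum_pk_term_eq hn).trans (sum_moebius_mul_eulerianA hn).symm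
  have hcoe (p : Polynomial ℚ) : (p : PowerSeries ℚ) = Polynomial.coeToPowerSeries.ringHom p := rfl
  apply Polynomial.coe_injective
  simp only [← Polynomial.coe_X, hcoe] at hseries ⊢
  simpa only [map_mul, map_sum, map_pow, map_add, map_sub, map_one, map_natCast, map_intCast,
    map_ofNat] using hseries

end
end
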